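/- Let Var(n) = (Σ_{k=1}^{n} (k − k̄(n))²·R_{n,k}) / (Σ_{k=1}^{n} R_{n,k}) be the variance of the number of short chords across all crystallized diagrams with n chords, where k̄(n) = (Σ_{k=1}^{n} k·R_{n,k}) / (Σ_{k=1}^{n} R_{n,k}). Then Var(n) · √(log³ n / (2n)) → 1 as n → ∞; that is, Var(n) is asymptotic to √(2n / log³ n) = k̄(n)³/(2n) asymptotically. -/

import Mathlib

/-!
A crystallized diagram with `k` short chords is determined by the gaps (between consecutive short
chords) in which the ends of its `m = n - k` long chords lie, by the pairing of these ends into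
chords joining different gaps, and by their order within each gap. Weighting the gap `l` by a
variable `s l` and integrating against `exp (-∑ l, s l)`, which produces the factorials counting
the orders, turns `2 ^ m * m ! * R n k` into the integral of
`((∑ l, s l) ^ 2 - ∑ l, s l ^ 2) ^ m * exp (-∑ l, s l)` over the positive orthant.

The base is positive on a round cone containing the orthant, and the integral over the whole cone
has a closed form in terms of `Γ`, which we call `coneCount n k` after normalization. A shear
fixing `∑ l, s l` carries the half of the cone where a given coordinate is nonpositive into a
slightly narrower cone, so the part of the cone outside the orthant contributes at most the fraction
`(k + 1) * (1 - 1 / k ^ 2) ^ (n - k / 2)`.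

The logarithm of `coneCount n k` has increments about `n / k ^ 2 - log (n / π) / 2`, so it is
peaked at `q = √(2 * n / log (n / π))` with curvature `-1 / s ^ 2`, where `q = log (n / π) * s ^ 2`.
Hence the sums of `((k - q) / s) ^ j * R n k` are Riemann sums for Gaussian moments, and the
variance is asymptotic to `s ^ 2`.
-/

namespace ChordBubbles

/-- A linear chord diagram with `n` chords: a fixed-point-free involution of `Fin (2*n)`. -/
def IsDiagram (n : ℕ) (f : Equiv.Perm (Fin (2 * n))) : Prop :=
  (∀ i, f (f i) = i) ∧ ∀ i, f i ≠ i

/-- Vertex `i` is an endpoint of a short chord (a chord joining adjacent vertices). -/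
def ShortEnd (n : ℕ) (f : Equiv.Perm (Fin (2 * n))) (i : Fin (2 * n)) : Prop :=
  (f i).val = i.val + 1 ∨ (f i).val + 1 = i.val

/-- `[a, b]` delimits a bubble: a maximal nonempty interval of vertices none of which is an
endpoint of a short chord. -/
def IsBubble (n : ℕ) (f : Equiv.Perm (Fin (2 * n))) (a b : ℕ) : Prop :=
  a ≤ b ∧ b < 2 * n ∧
  (∀ i : Fin (2 * n), a ≤ i.val → i.val ≤ b → ¬ ShortEnd n f i) ∧
  (a = 0 ∨ ∃ j : Fin (2 * n), j.val + 1 = a ∧ ShortEnd n f j) ∧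
  (b + 1 = 2 * n ∨ ∃ j : Fin (2 * n), j.val = b + 1 ∧ ShortEnd n f j)

/-- The size (number of vertices) of the bubble `[a, b]`. -/
def bubbleSize (a b : ℕ) : ℕ := b + 1 - a

/-- The number of bridges of the bubble `[a, b]` under the diagram `f`: the number of chords
joining a vertex inside the bubble to one outside it. -/
noncomputable def bridges (n : ℕ) (f : Equiv.Perm (Fin (2 * n))) (a b : ℕ) : ℕ :=
  Nat.card {i : Fin (2 * n) // (a ≤ i.val ∧ i.val ≤ b) ∧ ¬ (a ≤ (f i).val ∧ (f i).val ≤ b)}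

/-- `N n q b` : the number of pairs (diagram, bubble) where the diagram has `n` chords and the
bubble has size `q` and exactly `b` bridges. -/
noncomputable def N (n q b : ℕ) : ℕ :=
  Nat.card {p : Equiv.Perm (Fin (2 * n)) × ℕ × ℕ //
    IsDiagram n p.1 ∧ IsBubble n p.1 p.2.1 p.2.2 ∧
    bubbleSize p.2.1 p.2.2 = q ∧ bridges n p.1 p.2.1 p.2.2 = b}

/-- A diagram is crystallized when all its bubbles are empty, i.e., no chord joins two vertices
lying in the same bubble. -/
def Crystallized (n : ℕ) (f : Equiv.Perm (Fin (2 * n))) : Prop :=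
  ∀ a b, IsBubble n f a b → ∀ i : Fin (2 * n),
    a ≤ i.val → i.val ≤ b → ¬ (a ≤ (f i).val ∧ (f i).val ≤ b)

/-- The number of short chords of a diagram. -/
noncomputable def shortChords (n : ℕ) (f : Equiv.Perm (Fin (2 * n))) : ℕ :=
  Nat.card {i : Fin (2 * n) // (f i).val = i.val + 1}

/-- `R n k` : the number of crystallized diagrams with `n` chords, exactly `k` of them short. -/
noncomputable def R (n k : ℕ) : ℕ :=
  Nat.card {f : Equiv.Perm (Fin (2 * n)) //
    IsDiagram n f ∧ Crystallized n f ∧ shortChords n f = k}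

/-- The mean number of short chords counted across all crystallized diagrams with `n` chords. -/
noncomputable def meanShort (n : ℕ) : ℝ :=
  (∑ k ∈ Finset.Icc 1 n, (k : ℝ) * R n k) / (∑ k ∈ Finset.Icc 1 n, (R n k : ℝ))

/-- The variance of the number of short chords across all crystallized diagrams with
`n` chords. -/
noncomputable def varShort (n : ℕ) : ℝ :=
  (∑ k ∈ Finset.Icc 1 n, ((k : ℝ) - meanShort n) ^ 2 * R n k) /
  (∑ k ∈ Finset.Icc 1 n, (R n k : ℝ))

section Enumeration

variable {α : Type*} {N : ℕ}

lemma exists_equiv_fin_lt_iff_lt [Fintype α] {β : Type*} [LinearOrder β]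
    (hN : Fintype.card α = N) {key : α → β} (hkey : Function.Injective key) :
    ∃ e : α ≃ Fin N, ∀ x y, e x < e y ↔ key x < key y := by
  let _ : LinearOrder α := LinearOrder.lift' key hkey
  exact ⟨(Fintype.orderIsoFinOfCardEq α hN).symm.toEquiv,
    fun _ _ => (Fintype.orderIsoFinOfCardEq α hN).symm.lt_iff_lt⟩

lemma val_eq_val_add_one_of_covBy {β : Type*} [Preorder β] {e : α ≃ Fin N} {key : α → β}
    (he : ∀ x y, e x < e y ↔ key x < key y) {x y : α} (hxy : key x ⋖ key y) :
    (e y).val = (e x).val + 1 := by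
  have hlt : e x < e y := (he x y).2 hxy.lt
  by_contra hne
  obtain ⟨z, hz⟩ := e.surjective ⟨(e x).val + 1, by omega⟩
  exact hxy.2 ((he x z).1 (by simp [hz, Fin.lt_def]))
    ((he z y).1 (by simp only [hz, Fin.lt_def] at hlt ⊢; omega))

lemma val_eq_card_filter_lt [Fintype α] (e : α ≃ Fin N) (a : α) :
    (e a).val = (Finset.univ.filter fun x => e x < e a).card := by
  rw [← Fin.card_Iio, ← Finset.card_map e.symm.toEmbedding]
  congr 1
  ext x
  simp

lemma val_lt_card_filter_iff {k : ℕ} {p : Fin k → Prop} [DecidablePred p]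
    (hp : ∀ ⦃i j⦄, i ≤ j → p j → p i) (i : Fin k) :
    i.val < (Finset.univ.filter p).card ↔ p i := by
  constructor
  · contrapose!
    intro hi
    have hsub : Finset.univ.filter p ⊆ Finset.Iio i := fun j hj =>
      Finset.mem_Iio.2 (not_le.1 fun hij => hi (hp hij (Finset.mem_filter.1 hj).2))
    simpa using Finset.card_le_card hsub
  · intro hi
    have hsub : Finset.Iic i ⊆ Finset.univ.filter p := fun j hj =>
      Finset.mem_filter.2 ⟨Finset.mem_univ j, hp (Finset.mem_Iic.1 hj) hi⟩
    simpa using Finset.card_le_card hsub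

lemma injective_endpoint {ι : Type*} {β : Type*} [Preorder β] {f : Equiv.Perm β}
    (hf : Function.Involutive f) {D : ι → β} (hD : Function.Injective D)
    (hlt : ∀ i, D i < f (D i)) :
    Function.Injective fun x : ι × Bool => if x.2 then f (D x.1) else D x.1 := by
  have hne : ∀ i j, D i ≠ f (D j) := by
    intro i j h
    have := hlt i
    rw [h, hf] at this
    exact this.not_gt (hlt j)
  rintro ⟨i, _ | _⟩ ⟨j, _ | _⟩ h
  · simpa using hD h
  · exact absurd h (hne i j)
  · exact absurd h.symm (hne j i)
  · simpa using hD (f.injective h)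

end Enumeration

section Mate

variable {α : Type*}

/-- The involution exchanging the two ends of every chord, when the ends of the chords indexed by
`α` are encoded as `α × Bool`. -/
def mate : Equiv.Perm (α × Bool) := Equiv.prodCongrRight fun _ => Equiv.boolNot

@[simp] lemma mate_apply (x : α × Bool) : mate x = (x.1, !x.2) := rfl

lemma mate_mate (x : α × Bool) : mate (mate x) = x := by simp

lemma mate_ne (x : α × Bool) : mate x ≠ x := by
  obtain ⟨a, _ | _⟩ := x <;> simp

lemma card_commute_mate [Fintype α] :
    Nat.card {σ : Equiv.Perm (α × Bool) // ∀ l, σ (mate l) = mate (σ l)} =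
      (Fintype.card α).factorial * 2 ^ Fintype.card α := by
  classical
  have hsupport : (mate (α := α)).support = Finset.univ := by
    ext x
    simpa only [Equiv.Perm.mem_support, Finset.mem_univ, iff_true] using mate_ne x
  have hcycle := Equiv.Perm.cycleType_of_pow_prime_eq_one (p := 2)
    (Equiv.ext mate_mate : (mate (α := α)) ^ 2 = 1)
  have hsum := Equiv.Perm.sum_cycleType (mate (α := α))
  rw [hcycle, hsupport] at hsum
  have hcard : Multiset.card (mate (α := α)).cycleType = Fintype.card α := by
    simpa using hsum
  calc Nat.card {σ : Equiv.Perm (α × Bool) // ∀ l, σ (mate l) = mate (σ l)}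
      = Nat.card (Subgroup.centralizer {mate (α := α)}) :=
        Nat.card_congr (Equiv.subtypeEquivRight fun σ => by
          simp only [Subgroup.mem_centralizer_singleton_iff, Equiv.ext_iff, Equiv.Perm.mul_apply])
    _ = _ := by
      rw [Equiv.Perm.nat_card_centralizer, hcycle, hcard]
      by_cases h0 : Fintype.card α = 0
      · simp [h0]
      · simp [h0, Multiset.toFinset_replicate, mul_comm]

end Mate

section Bubbles

variable {n : ℕ} {f : Equiv.Perm (Fin (2 * n))}

lemma IsDiagram.shortEnd_apply (hf : IsDiagram n f) (v : Fin (2 * n)) :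
    ShortEnd n f (f v) ↔ ShortEnd n f v := by
  rw [ShortEnd, ShortEnd, hf.1]
  omega

lemma IsDiagram.card_filter_lt_apply (hf : IsDiagram n f) :
    (Finset.univ.filter fun v => v < f v).card = n := by
  have hswap : (Finset.univ.filter fun v => v < f v).card =
      (Finset.univ.filter fun v => f v < v).card :=
    Finset.card_bijective f f.bijective fun v => by simp [hf.1]
  have hcompl : (Finset.univ.filter fun v => ¬ v < f v) = Finset.univ.filter fun v => f v < v :=
    Finset.filter_congr fun v _ => not_lt.trans (hf.2 v).le_iff_lt
  have hsum := Finset.card_filter_add_card_filter_not (s := (Finset.univ : Finset (Fin (2 * n))))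
    (fun v => v < f v)
  rw [hcompl, ← hswap, Finset.card_univ, Fintype.card_fin] at hsum
  omega

lemma exists_bubble_left_end {v : Fin (2 * n)} (hv : ¬ ShortEnd n f v) :
    ∃ a ≤ v.val, (∀ u : Fin (2 * n), a ≤ u.val → u ≤ v → ¬ ShortEnd n f u) ∧
      (a = 0 ∨ ∃ j : Fin (2 * n), j.val + 1 = a ∧ ShortEnd n f j) := by
  classical
  have hex : ∃ a, ∀ u : Fin (2 * n), a ≤ u.val → u ≤ v → ¬ ShortEnd n f u :=
    ⟨v.val, fun u h₁ h₂ => by rwa [le_antisymm h₂ h₁]⟩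
  refine ⟨Nat.find hex, Nat.find_min' hex fun u h₁ h₂ => by rwa [le_antisymm h₂ h₁],
    Nat.find_spec hex, or_iff_not_imp_left.2 fun hpos => ?_⟩
  have hmin := Nat.find_min hex (m := Nat.find hex - 1) (by omega)
  push Not at hmin
  obtain ⟨u, hu₁, hu₂, hu⟩ := hmin
  refine ⟨u, ?_, hu⟩
  by_contra hne
  have hle : Nat.find hex ≤ u.val := by omega
  exact Nat.find_spec hex u hle hu₂ hu

lemma exists_bubble_right_end {w : Fin (2 * n)} (hw : ¬ ShortEnd n f w) :
    ∃ b, w.val ≤ b ∧ b < 2 * n ∧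
      (∀ u : Fin (2 * n), w ≤ u → u.val ≤ b → ¬ ShortEnd n f u) ∧
      (b + 1 = 2 * n ∨ ∃ j : Fin (2 * n), j.val = b + 1 ∧ ShortEnd n f j) := by
  classical
  have hex : ∃ b, w.val ≤ b ∧
      (b + 1 = 2 * n ∨ ∃ j : Fin (2 * n), j.val = b + 1 ∧ ShortEnd n f j) :=
    ⟨2 * n - 1, by omega, Or.inl (by have := w.isLt; omega)⟩
  have hlt : Nat.find hex < 2 * n := by
    rcases (Nat.find_spec hex).2 with h | ⟨j, h, -⟩ <;> omega
  refine ⟨Nat.find hex, (Nat.find_spec hex).1, hlt, fun u hwu hub hu => ?_,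
    (Nat.find_spec hex).2⟩
  rcases hwu.eq_or_lt with rfl | hwu
  · exact hw hu
  · rw [Fin.lt_def] at hwu
    exact Nat.find_min hex (m := u.val - 1) (by omega)
      ⟨by omega, Or.inr ⟨u, by omega, hu⟩⟩

lemma exists_isBubble {v w : Fin (2 * n)} (hvw : v ≤ w)
    (h : ∀ u, v ≤ u → u ≤ w → ¬ ShortEnd n f u) :
    ∃ a b, IsBubble n f a b ∧ a ≤ v.val ∧ w.val ≤ b := by
  obtain ⟨a, hav, ha, hleft⟩ := exists_bubble_left_end (h v le_rfl hvw)
  obtain ⟨b, hwb, hbn, hb, hright⟩ := exists_bubble_right_end (h w hvw le_rfl)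
  refine ⟨a, b, ⟨by omega, hbn, fun u hau hub => ?_, hleft, hright⟩, hav, hwb⟩
  rcases le_total u v with huv | hvu
  · exact ha u hau huv
  rcases le_total u w with huw | hwu
  · exact h u hvu huw
  · exact hb u hwu hub

lemma IsDiagram.exists_short_between (hf : IsDiagram n f) {u v : Fin (2 * n)}
    (hv : ¬ ShortEnd n f v) (hvu : v ≤ u) (huv : u ≤ f v) (hu : ShortEnd n f u) :
    ∃ w, v < w ∧ w < f v ∧ (f w).val = w.val + 1 := by
  have hne : u ≠ v := by rintro rfl; exact hv hu
  have hne' : u ≠ f v := by rintro rfl; exact hv ((hf.shortEnd_apply v).1 hu)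
  rcases hu with hu | hu
  · exact ⟨u, hvu.lt_of_ne' hne, huv.lt_of_ne hne', hu⟩
  · have hfu : f u ≠ v := fun h => hne' (by rw [← h, hf.1])
    refine ⟨f u, ?_, ?_, by rw [hf.1]; exact hu.symm⟩ <;>
      simp only [Fin.le_def, Fin.lt_def, ne_eq, Fin.ext_iff] at * <;> omega

lemma IsDiagram.crystallized_iff (hf : IsDiagram n f) :
    Crystallized n f ↔ ∀ v, v < f v → ¬ ShortEnd n f v →
      ∃ u, v < u ∧ u < f v ∧ (f u).val = u.val + 1 := by
  constructor
  · intro hc v hlt hv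
    by_contra hnone
    obtain ⟨a, b, hab, hav, hvb⟩ := exists_isBubble hlt.le fun u hvu huv hu =>
      hnone (hf.exists_short_between hv hvu huv hu)
    rw [Fin.lt_def] at hlt
    exact hc a b hab v hav (by omega) ⟨by omega, hvb⟩
  · intro h a b hab
    have hopener : ∀ v, v < f v → a ≤ v.val → (f v).val ≤ b → False := by
      intro v hlt hav hvb
      rw [Fin.lt_def] at hlt
      obtain ⟨u, hvu, huv, hu⟩ := h v hlt (hab.2.2.1 v hav (by omega))
      rw [Fin.lt_def] at hvu huv
      exact hab.2.2.1 u (by omega) (by omega) (Or.inl hu)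
    rintro v hav hvb ⟨hafv, hfvb⟩
    rcases lt_or_gt_of_ne (hf.2 v) with hlt | hlt
    · exact hopener (f v) (by rwa [hf.1]) hafv (by rwa [hf.1])
    · exact hopener v hlt hav hfvb

end Bubbles

section Labellings

variable {m k : ℕ}

/-- A labelling of the vertices by the ends of `k` numbered short chords (left summand) and of `m`
numbered long chords (right summand). -/
abbrev Labelling (m k : ℕ) := (Fin k × Bool) ⊕ (Fin m × Bool) ≃ Fin (2 * (m + k))

namespace Labelling

variable (φ : Labelling m k)

/-- The short chords of the labelling do join adjacent vertices, with the `false` end first, and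
they are numbered from left to right. -/
structure IsOrdered : Prop where
  val_true : ∀ i, (φ (Sum.inl (i, true))).val = (φ (Sum.inl (i, false))).val + 1
  strictMono : StrictMono fun i => φ (Sum.inl (i, false))

/-- The chord diagram underlying a labelling. -/
def toDiagram : Equiv.Perm (Fin (2 * (m + k))) := φ.permCongr (Equiv.sumCongr mate mate)

/-- The gap between consecutive short chords containing a given long end, encoded as the number of
short chords to its left. -/
def gap (l : Fin m × Bool) : Fin (k + 1) :=
  ⟨(Finset.univ.filter fun i => φ (Sum.inl (i, false)) < φ (Sum.inr l)).card,
    Nat.lt_succ_of_le ((Finset.card_filter_le _ _).trans_eq (by simp))⟩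

/-- The labelling with the long ends permuted by `σ`. -/
def relabel (σ : Equiv.Perm (Fin m × Bool)) : Labelling m k :=
  (Equiv.sumCongr (Equiv.refl _) σ).trans φ

@[simp] lemma relabel_inl (σ : Equiv.Perm (Fin m × Bool)) (x : Fin k × Bool) :
    φ.relabel σ (Sum.inl x) = φ (Sum.inl x) := rfl

@[simp] lemma relabel_inr (σ : Equiv.Perm (Fin m × Bool)) (l : Fin m × Bool) :
    φ.relabel σ (Sum.inr l) = φ (Sum.inr (σ l)) := rfl

lemma relabel_injective : Function.Injective φ.relabel := by
  intro σ τ h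
  ext1 l
  simpa using Equiv.congr_fun h (Sum.inr l)

variable {φ} in
lemma IsOrdered.relabel (hφ : φ.IsOrdered) (σ : Equiv.Perm (Fin m × Bool)) :
    (φ.relabel σ).IsOrdered := ⟨hφ.val_true, hφ.strictMono⟩

lemma exists_eq_relabel {φ φ' : Labelling m k}
    (h : ∀ x, φ (Sum.inl x) = φ' (Sum.inl x)) : ∃ σ, φ' = φ.relabel σ := by
  obtain ⟨⟨τ, σ⟩, hσ⟩ := Equiv.Perm.mem_sumCongrHom_range_of_perm_mapsTo_inl
    (σ := φ'.trans φ.symm) (by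
      rintro _ ⟨x, rfl⟩
      exact ⟨x, by simp [← h]⟩)
  refine ⟨σ, Equiv.ext ?_⟩
  rintro (x | l)
  · exact (h x).symm
  · have := Equiv.congr_fun hσ (Sum.inr l)
    simpa [Equiv.eq_symm_apply, eq_comm] using this

section Ordered

variable {φ} {φ' : Labelling m k}

lemma gap_mono {l l' : Fin m × Bool} (h : φ (Sum.inr l) ≤ φ (Sum.inr l')) :
    φ.gap l ≤ φ.gap l' := by
  rw [gap, gap, Fin.mk_le_mk]
  refine Finset.card_le_card fun i hi => ?_
  simp only [Finset.mem_filter, Finset.mem_univ, true_and] at hi ⊢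
  exact hi.trans_le h

lemma gap_eq_of_lt_iff {c : Fin m × Bool → Fin (k + 1)}
    (h : ∀ i l, φ (Sum.inl (i, false)) < φ (Sum.inr l) ↔ i.castSucc < c l) : φ.gap = c := by
  funext l
  have hIio : (Finset.univ.filter fun i : Fin k => i.castSucc < c l).card = (c l).val := by
    simpa [Fin.lt_def, Nat.le_of_lt_succ (c l).2] using
      Fin.card_filter_val_lt (n := k) (m := (c l).val)
  exact Fin.ext ((congrArg Finset.card (Finset.filter_congr fun i _ => h i l)).trans hIio)

lemma IsOrdered.castSucc_lt_gap_iff (hφ : φ.IsOrdered) (i : Fin k) (l : Fin m × Bool) :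
    i.castSucc < φ.gap l ↔ φ (Sum.inl (i, false)) < φ (Sum.inr l) :=
  val_lt_card_filter_iff (fun _ _ hij h => (hφ.strictMono.monotone hij).trans_lt h) i

lemma IsOrdered.inr_lt_inl_iff (hφ : φ.IsOrdered) (i : Fin k) (l : Fin m × Bool) :
    φ (Sum.inr l) < φ (Sum.inl (i, false)) ↔ φ.gap l ≤ i.castSucc := by
  rw [← not_lt, hφ.castSucc_lt_gap_iff, not_lt]
  exact (φ.injective.ne Sum.inr_ne_inl).le_iff_lt.symm

lemma IsOrdered.gap_lt_gap_iff (hφ : φ.IsOrdered) (l l' : Fin m × Bool) :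
    φ.gap l < φ.gap l' ↔
      ∃ i, φ (Sum.inr l) < φ (Sum.inl (i, false)) ∧ φ (Sum.inl (i, false)) < φ (Sum.inr l') := by
  simp only [hφ.inr_lt_inl_iff, ← hφ.castSucc_lt_gap_iff]
  exact ⟨fun h => ⟨⟨φ.gap l, (Fin.lt_def.1 h).trans_le (Nat.lt_succ_iff.1 (φ.gap l').2)⟩,
    le_rfl, h⟩, fun ⟨_, h, h'⟩ => h.trans_lt h'⟩

lemma IsOrdered.inl_lt_inl_iff (hφ : φ.IsOrdered) (i j : Fin k) (b : Bool) :
    φ (Sum.inl (j, b)) < φ (Sum.inl (i, false)) ↔ j < i := by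
  have hfalse : φ (Sum.inl (j, false)) < φ (Sum.inl (i, false)) ↔ j < i := hφ.strictMono.lt_iff_lt
  cases b
  · exact hfalse
  · have hne : φ (Sum.inl (j, true)) ≠ φ (Sum.inl (i, false)) := φ.injective.ne (by simp)
    have hval := hφ.val_true j
    rw [← hfalse, Fin.lt_def, Fin.lt_def]
    rw [Ne, Fin.ext_iff] at hne
    omega

lemma IsOrdered.inl_eq_of_inl_false_eq (hφ : φ.IsOrdered) (hφ' : φ'.IsOrdered)
    (h : ∀ i, φ (Sum.inl (i, false)) = φ' (Sum.inl (i, false))) (x : Fin k × Bool) :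
    φ (Sum.inl x) = φ' (Sum.inl x) := by
  obtain ⟨i, _ | _⟩ := x
  · exact h i
  · exact Fin.ext (by rw [hφ.val_true, hφ'.val_true, h])

lemma IsOrdered.inl_eq_of_gap_eq (hφ : φ.IsOrdered) (hφ' : φ'.IsOrdered) (h : φ.gap = φ'.gap)
    (x : Fin k × Bool) : φ (Sum.inl x) = φ' (Sum.inl x) := by
  refine hφ.inl_eq_of_inl_false_eq hφ' (fun i => Fin.ext ?_) x
  rw [val_eq_card_filter_lt, val_eq_card_filter_lt]
  congr 1
  refine Finset.filter_congr ?_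
  rintro (⟨j, b⟩ | l) -
  · rw [hφ.inl_lt_inl_iff, hφ'.inl_lt_inl_iff]
  · rw [hφ.inr_lt_inl_iff, hφ'.inr_lt_inl_iff, h]

lemma exists_isOrdered_gap_eq (c : Fin m × Bool → Fin (k + 1)) :
    ∃ φ : Labelling m k, φ.IsOrdered ∧ φ.gap = c := by
  let e : Fin m × Bool ≃ Fin (2 * m) := Fintype.equivFinOfCardEq (by simp [mul_comm])
  let key : (Fin k × Bool) ⊕ (Fin m × Bool) → ℕ ×ₗ ℕ :=
    Sum.elim (fun x => toLex (x.1.val, 2 * m + x.2.toNat)) fun l => toLex ((c l).val, (e l).val)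
  have hkey : Function.Injective key := by
    rintro (⟨i, b⟩ | l) (⟨j, b'⟩ | l') h <;>
      simp only [key, Sum.elim_inl, Sum.elim_inr, toLex_inj, Prod.mk.injEq] at h
    · cases b <;> cases b' <;> simp_all [Fin.ext_iff]
    · omega
    · omega
    · rw [e.injective (Fin.ext h.2)]
  obtain ⟨φ, hφ⟩ := exists_equiv_fin_lt_iff_lt (N := 2 * (m + k)) (by simp; ring) hkey
  refine ⟨φ, ⟨fun i => val_eq_val_add_one_of_covBy hφ ⟨?_, ?_⟩, fun i j hij => ?_⟩,
    gap_eq_of_lt_iff fun i l => ?_⟩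
  · simp [key, Prod.Lex.toLex_lt_toLex]
  · simp only [key, Sum.elim_inl, Bool.toNat_false, Bool.toNat_true, Lex.forall, Prod.forall,
      Prod.Lex.toLex_lt_toLex]
    omega
  · rw [hφ]
    exact Prod.Lex.toLex_lt_toLex.2 (Or.inl hij)
  · rw [hφ, Fin.lt_def]
    simp only [key, Sum.elim_inl, Sum.elim_inr, Prod.Lex.toLex_lt_toLex, Bool.toNat_false,
      Fin.val_castSucc]
    omega

end Ordered

end Labelling

end Labellings

section Counting

variable {m k : ℕ}

/-- No long chord has both ends in the same gap `c l`. -/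
def IsLoopless (c : Fin m × Bool → Fin (k + 1)) : Prop := ∀ l, c (mate l) ≠ c l

namespace Labelling

variable {φ : Labelling m k}

lemma toDiagram_apply (φ : Labelling m k) (x : (Fin k × Bool) ⊕ (Fin m × Bool)) :
    φ.toDiagram (φ x) = φ (Sum.map mate mate x) := by
  simp [toDiagram, Equiv.permCongr_apply]

lemma toDiagram_eq_iff {f : Equiv.Perm (Fin (2 * (m + k)))} :
    φ.toDiagram = f ↔ ∀ x, f (φ x) = φ (Sum.map mate mate x) := by
  rw [Equiv.ext_iff, φ.surjective.forall]
  simp only [toDiagram_apply, eq_comm]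

lemma isDiagram_toDiagram (φ : Labelling m k) : IsDiagram (m + k) φ.toDiagram := by
  constructor <;> rw [φ.surjective.forall]
  · rintro (x | l) <;> simp only [toDiagram_apply, Sum.map_inl, Sum.map_inr, mate_mate]
  · rintro (x | l) <;> simp only [toDiagram_apply, Sum.map_inl, Sum.map_inr] <;>
      exact φ.injective.ne (by simpa using mate_ne _)

lemma IsOrdered.shortEnd_inl (hφ : φ.IsOrdered) (x : Fin k × Bool) :
    ShortEnd (m + k) φ.toDiagram (φ (Sum.inl x)) := by
  obtain ⟨i, _ | _⟩ := x <;> rw [ShortEnd, toDiagram_apply]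
  · exact Or.inl (hφ.val_true i)
  · exact Or.inr (hφ.val_true i).symm

lemma IsOrdered.toDiagram_inl_false (hφ : φ.IsOrdered) (i : Fin k) :
    (φ.toDiagram (φ (Sum.inl (i, false)))).val = (φ (Sum.inl (i, false))).val + 1 := by
  rw [toDiagram_apply]
  exact hφ.val_true i

lemma IsOrdered.shortChords_eq_iff (hφ : φ.IsOrdered) :
    shortChords (m + k) φ.toDiagram = k ↔
      ∀ v, (φ.toDiagram v).val = v.val + 1 ↔ v ∈ Set.range fun i => φ (Sum.inl (i, false)) := by
  have hsub : (Set.range fun i => φ (Sum.inl (i, false))) ⊆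
      {v | (φ.toDiagram v).val = v.val + 1} := by
    rintro _ ⟨i, rfl⟩
    exact hφ.toDiagram_inl_false i
  have hcard : (Set.range fun i => φ (Sum.inl (i, false))).ncard = k := by
    rw [Set.ncard_range_of_injective hφ.strictMono.injective, Nat.card_fin]
  have hshort : shortChords (m + k) φ.toDiagram =
      {v | (φ.toDiagram v).val = v.val + 1}.ncard := rfl
  rw [hshort]
  constructor
  · intro h v
    rw [Set.eq_of_subset_of_ncard_le hsub (h.trans hcard.symm).le]
    rfl
  · intro h
    rw [show {v | (φ.toDiagram v).val = v.val + 1} = Set.range fun i => φ (Sum.inl (i, false)) from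
      Set.ext h, hcard]

lemma IsOrdered.not_shortEnd_inr (hφ : φ.IsOrdered) (hk : shortChords (m + k) φ.toDiagram = k)
    (l : Fin m × Bool) : ¬ ShortEnd (m + k) φ.toDiagram (φ (Sum.inr l)) := by
  have hne : ∀ l, (φ.toDiagram (φ (Sum.inr l))).val ≠ (φ (Sum.inr l)).val + 1 := by
    intro l hl
    obtain ⟨i, hi⟩ := (hφ.shortChords_eq_iff.1 hk _).1 hl
    simpa using φ.injective hi
  rintro (hl | hl)
  · exact hne l hl
  · rw [toDiagram_apply] at hl
    exact hne (mate l) (by simpa [toDiagram_apply] using hl.symm)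

lemma IsOrdered.isLoopless_gap (hφ : φ.IsOrdered) (hc : Crystallized (m + k) φ.toDiagram)
    (hk : shortChords (m + k) φ.toDiagram = k) : IsLoopless φ.gap := by
  have hlt : ∀ l, φ (Sum.inr l) < φ (Sum.inr (mate l)) → φ.gap l < φ.gap (mate l) := by
    intro l hl
    rw [hφ.gap_lt_gap_iff]
    obtain ⟨u, hlu, hul, hu⟩ := (φ.isDiagram_toDiagram.crystallized_iff.1 hc) (φ (Sum.inr l))
      (by rwa [toDiagram_apply]) (hφ.not_shortEnd_inr hk l)
    obtain ⟨i, rfl⟩ := (hφ.shortChords_eq_iff.1 hk _).1 hu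
    rw [toDiagram_apply] at hul
    exact ⟨i, hlu, hul⟩
  intro l
  rcases lt_trichotomy (φ (Sum.inr l)) (φ (Sum.inr (mate l))) with h | h | h
  · exact (hlt l h).ne'
  · exact absurd (Sum.inr_injective (φ.injective h)) (mate_ne l).symm
  · have := hlt (mate l) (by rwa [mate_mate])
    rw [mate_mate] at this
    exact this.ne

lemma IsOrdered.exists_inl_between (hφ : φ.IsOrdered) (hl : IsLoopless φ.gap) {l : Fin m × Bool}
    (h : φ (Sum.inr l) < φ (Sum.inr (mate l))) :
    ∃ i, φ (Sum.inr l) < φ (Sum.inl (i, false)) ∧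
      φ (Sum.inl (i, false)) < φ (Sum.inr (mate l)) :=
  (hφ.gap_lt_gap_iff l (mate l)).1 ((gap_mono h.le).lt_of_ne (hl l).symm)

lemma IsOrdered.shortChords_of_isLoopless (hφ : φ.IsOrdered) (hl : IsLoopless φ.gap) :
    shortChords (m + k) φ.toDiagram = k := by
  refine hφ.shortChords_eq_iff.2 fun v => ⟨fun hv => ?_, ?_⟩
  · obtain ⟨⟨i, _ | _⟩ | l, rfl⟩ := φ.surjective v
    · exact ⟨i, rfl⟩
    · have := hφ.val_true i
      simp only [toDiagram_apply, Sum.map_inl, mate_apply, Bool.not_true] at hv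
      omega
    · rw [toDiagram_apply, Sum.map_inr] at hv
      obtain ⟨i, hi, hi'⟩ := hφ.exists_inl_between hl (l := l) (by rw [Fin.lt_def]; omega)
      rw [Fin.lt_def] at hi hi'
      omega
  · rintro ⟨i, rfl⟩
    exact hφ.toDiagram_inl_false i

lemma IsOrdered.crystallized_of_isLoopless (hφ : φ.IsOrdered) (hl : IsLoopless φ.gap) :
    Crystallized (m + k) φ.toDiagram := by
  refine φ.isDiagram_toDiagram.crystallized_iff.2 fun v hlt hv => ?_
  obtain ⟨x | l, rfl⟩ := φ.surjective v
  · exact absurd (hφ.shortEnd_inl x) hv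
  · rw [toDiagram_apply] at hlt ⊢
    obtain ⟨i, hi, hi'⟩ := hφ.exists_inl_between hl hlt
    exact ⟨_, hi, hi', hφ.toDiagram_inl_false i⟩

end Labelling

open Labelling

open Classical in
lemma IsDiagram.exists_openers {f : Equiv.Perm (Fin (2 * (m + k)))} (hf : IsDiagram (m + k) f)
    (hk : shortChords (m + k) f = k) :
    ∃ (d : Fin k → Fin (2 * (m + k))) (e : Fin m → Fin (2 * (m + k))), StrictMono d ∧
      (∀ i, (f (d i)).val = (d i).val + 1) ∧ Function.Injective (Sum.elim d e) ∧
      ∀ j, e j < f (e j) := by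
  set S := Finset.univ.filter fun v => (f v).val = v.val + 1 with hS
  have hSk : S.card = k := by
    rwa [shortChords, Nat.card_eq_fintype_card, Fintype.card_subtype] at hk
  have hsub : S ⊆ Finset.univ.filter fun v => v < f v :=
    Finset.monotone_filter_right _ fun v _ hv => Fin.lt_def.2 (by omega)
  set L := (Finset.univ.filter fun v => v < f v) \ S
  have hLm : L.card = m := by
    have := Finset.card_sdiff_add_card_eq_card hsub
    rw [hf.card_filter_lt_apply, hSk] at this
    exact Nat.add_right_cancel this
  have hdS : ∀ i, S.orderEmbOfFin hSk i ∈ S := S.orderEmbOfFin_mem hSk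
  have heL : ∀ j, L.orderEmbOfFin hLm j ∈ L := L.orderEmbOfFin_mem hLm
  refine ⟨S.orderEmbOfFin hSk, L.orderEmbOfFin hLm, (S.orderEmbOfFin hSk).strictMono,
    fun i => (Finset.mem_filter.1 (hdS i)).2, ?_,
    fun j => (Finset.mem_filter.1 (Finset.mem_sdiff.1 (heL j)).1).2⟩
  refine (S.orderEmbOfFin hSk).injective.sumElim (L.orderEmbOfFin hLm).injective fun i j hij => ?_
  exact (Finset.mem_sdiff.1 (heL j)).2 (hij ▸ hdS i)

lemma IsDiagram.exists_labelling {f : Equiv.Perm (Fin (2 * (m + k)))} (hf : IsDiagram (m + k) f)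
    (hk : shortChords (m + k) f = k) :
    ∃ φ : Labelling m k, φ.IsOrdered ∧ φ.toDiagram = f := by
  obtain ⟨d, e, hd, hshort, hinj, he⟩ := hf.exists_openers hk
  have hlt : ∀ x, Sum.elim d e x < f (Sum.elim d e x) := by
    rintro (i | j)
    · exact Fin.lt_def.2 (by rw [Sum.elim_inl, hshort]; exact Nat.lt_succ_self _)
    · exact he j
  have hbij := (Fintype.bijective_iff_injective_and_card _).2
    ⟨injective_endpoint hf.1 hinj hlt, by simp; ring⟩
  refine ⟨(Equiv.sumProdDistrib _ _ _).symm.trans (Equiv.ofBijective _ hbij), ⟨hshort, hd⟩, ?_⟩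
  rw [toDiagram_eq_iff]
  rintro (⟨i, _ | _⟩ | ⟨j, _ | _⟩) <;> simp [hf.1]

open Classical in
lemma card_isOrdered_gap_eq (c : Fin m × Bool → Fin (k + 1)) :
    Nat.card {φ : Labelling m k // φ.IsOrdered ∧ φ.gap = c} =
      ∏ i, (Fintype.card {l // c l = i}).factorial := by
  obtain ⟨φ, hφ, rfl⟩ := exists_isOrdered_gap_eq c
  rw [← DomMulAct.stabilizer_card φ.gap, ← Nat.card_eq_fintype_card]
  refine (Nat.card_eq_of_bijective (fun σ => ⟨φ.relabel σ.1, hφ.relabel σ.1, σ.2⟩) ⟨?_, ?_⟩).symm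
  · intro σ τ h
    exact Subtype.ext (φ.relabel_injective (congrArg Subtype.val h))
  · rintro ⟨φ', hφ', hgap⟩
    obtain ⟨σ, rfl⟩ := exists_eq_relabel (hφ.inl_eq_of_gap_eq hφ' hgap.symm)
    exact ⟨⟨σ, hgap⟩, rfl⟩

lemma IsDiagram.card_isOrdered_toDiagram_eq {f : Equiv.Perm (Fin (2 * (m + k)))}
    (hf : IsDiagram (m + k) f) (hk : shortChords (m + k) f = k) :
    Nat.card {φ : Labelling m k // φ.IsOrdered ∧ φ.toDiagram = f} = m.factorial * 2 ^ m := by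
  obtain ⟨φ, hφ, rfl⟩ := hf.exists_labelling hk
  have hrelabel : ∀ σ : Equiv.Perm (Fin m × Bool),
      (φ.relabel σ).toDiagram = φ.toDiagram ↔ ∀ l, σ (mate l) = mate (σ l) := by
    intro σ
    simp only [toDiagram_eq_iff, Sum.forall, relabel_inl, relabel_inr, toDiagram_apply,
      Sum.map_inl, Sum.map_inr, φ.injective.eq_iff, Sum.inr.injEq, implies_true, true_and]
    exact forall_congr' fun l => eq_comm
  have hcard := card_commute_mate (α := Fin m)
  rw [Fintype.card_fin] at hcard
  rw [← hcard]
  refine (Nat.card_eq_of_bijective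
    (fun σ => ⟨φ.relabel σ.1, hφ.relabel σ.1, (hrelabel σ.1).2 σ.2⟩) ⟨?_, ?_⟩).symm
  · intro σ τ h
    exact Subtype.ext (φ.relabel_injective (congrArg Subtype.val h))
  · rintro ⟨φ', hφ', hdiag⟩
    have hrange : (fun i => φ (Sum.inl (i, false))) = fun i => φ' (Sum.inl (i, false)) := by
      refine (hφ.strictMono.range_inj hφ'.strictMono).1 (Set.ext fun v => ?_)
      rw [← hφ.shortChords_eq_iff.1 hk, ← hφ'.shortChords_eq_iff.1 (hdiag ▸ hk), hdiag]
    obtain ⟨σ, rfl⟩ := exists_eq_relabel (hφ.inl_eq_of_inl_false_eq hφ' (congrFun hrange))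
    exact ⟨⟨σ, (hrelabel σ).1 hdiag⟩, rfl⟩

open Classical in
/-- Double counting of the ordered labellings of crystallized diagrams: by the diagram, and by the
gaps of the long ends. -/
theorem R_mul_eq_sum_isLoopless (m k : ℕ) :
    R (m + k) k * (m.factorial * 2 ^ m) =
      ∑ c : Fin m × Bool → Fin (k + 1) with IsLoopless c,
        ∏ i, (Fintype.card {l // c l = i}).factorial := by
  let s := Finset.univ.filter fun φ : Labelling m k => φ.IsOrdered ∧ IsLoopless φ.gap
  let t := Finset.univ.filter fun f => IsDiagram (m + k) f ∧ Crystallized (m + k) f ∧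
    shortChords (m + k) f = k
  have hcard : ∀ (p : Labelling m k → Prop) [DecidablePred p],
      (∀ φ, p φ → φ.IsOrdered → IsLoopless φ.gap) →
      (s.filter p).card = Nat.card {φ : Labelling m k // φ.IsOrdered ∧ p φ} := by
    intro p _ hp
    rw [Nat.card_eq_fintype_card, Fintype.card_subtype, Finset.filter_filter]
    exact congrArg Finset.card (Finset.filter_congr fun φ _ => ⟨fun h => ⟨h.1.1, h.2⟩,
      fun h => ⟨⟨h.1, hp φ h.2 h.1⟩, h.2⟩⟩)
  have ht : R (m + k) k = t.card := by
    rw [R, Nat.card_eq_fintype_card, Fintype.card_subtype]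
  have hdiagram := Finset.card_eq_sum_card_fiberwise (f := toDiagram) (s := s) (t := t)
    fun φ hφ => by
      obtain ⟨hord, hl⟩ := (Finset.mem_filter.1 hφ).2
      exact Finset.mem_filter.2 ⟨Finset.mem_univ _, φ.isDiagram_toDiagram,
        hord.crystallized_of_isLoopless hl, hord.shortChords_of_isLoopless hl⟩
  have hgap := Finset.card_eq_sum_card_fiberwise (f := gap) (s := s)
    (t := Finset.univ.filter IsLoopless) fun φ hφ =>
      Finset.mem_filter.2 ⟨Finset.mem_univ _, (Finset.mem_filter.1 hφ).2.2⟩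
  rw [ht, ← smul_eq_mul, ← Finset.sum_const]
  refine (Finset.sum_congr rfl fun f hf => ?_).trans (hdiagram.symm.trans (hgap.trans
    (Finset.sum_congr rfl fun c hc => ?_)))
  · obtain ⟨hf, hc, hk⟩ := (Finset.mem_filter.1 hf).2
    rw [hcard (toDiagram · = f) (by rintro φ rfl hφ; exact hφ.isLoopless_gap hc hk),
      hf.card_isOrdered_toDiagram_eq hk]
  · rw [hcard (gap · = c) (by rintro φ rfl -; exact (Finset.mem_filter.1 hc).2),
      card_isOrdered_gap_eq]

end Counting

section BallIntegral

open MeasureTheory Set ENNReal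

lemma lintegral_fin_prod_eq_prod {α : Type*} [MeasurableSpace α] {μ : Measure α} [SigmaFinite μ] :
    ∀ {n : ℕ} {f : Fin n → α → ℝ≥0∞}, (∀ i, Measurable (f i)) →
      ∫⁻ x, ∏ i, f i (x i) ∂Measure.pi (fun _ => μ) = ∏ i, ∫⁻ x, f i x ∂μ
  | 0, f, _ => by simp
  | n + 1, f, hf => by
    rw [← (measurePreserving_piFinSuccAbove (fun _ => μ) 0).symm.lintegral_comp_emb
      (MeasurableEquiv.measurableEmbedding _), Fin.prod_univ_succ,
      ← lintegral_fin_prod_eq_prod fun i => hf i.succ,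
      ← lintegral_prod_mul (hf 0).aemeasurable (Finset.measurable_fun_prod _ fun i _ =>
        (hf i.succ).comp (measurable_pi_apply i)).aemeasurable]
    simp [Fin.prod_univ_succ, Fin.insertNthEquiv]

lemma lintegral_exp_neg_mul_rpow {a r : ℝ} (ha : -1 < a) (hr : 0 < r) :
    ∫⁻ t in Ioi 0, ENNReal.ofReal (Real.exp (-(r * t)) * t ^ a) =
      ENNReal.ofReal (Real.Gamma (a + 1) / r ^ (a + 1)) := by
  have hint := integrableOn_rpow_mul_exp_neg_mul_rpow ha one_pos hr
  have hval := Real.integral_rpow_mul_exp_neg_mul_Ioi (a := a + 1) (by linarith) hr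
  simp only [Real.rpow_one, neg_mul] at hint
  rw [add_sub_cancel_right, one_div, Real.inv_rpow hr.le, ← div_eq_inv_mul] at hval
  simp only [mul_comm (Real.exp _)]
  rw [← hval, ofReal_integral_eq_lintegral_ofReal hint]
  filter_upwards [ae_restrict_mem measurableSet_Ioi] with t (ht : 0 < t)
  exact mul_nonneg (by positivity) (Real.exp_pos _).le

lemma lintegral_exp_neg_mul_pow (d : ℕ) :
    ∫⁻ t in Ioi (0 : ℝ), ENNReal.ofReal (Real.exp (-t) * t ^ d) = d.factorial := by
  simpa [Real.Gamma_nat_eq_factorial] using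
    lintegral_exp_neg_mul_rpow (a := d) (by linarith [d.cast_nonneg (α := ℝ)]) one_pos

lemma lintegral_exp_neg_sum_sq (k : ℕ) :
    ∫⁻ v : Fin k → ℝ, ENNReal.ofReal (Real.exp (-∑ i, v i ^ 2)) =
      ENNReal.ofReal (Real.pi ^ ((k : ℝ) / 2)) := by
  have hgauss : ∫⁻ x : ℝ, ENNReal.ofReal (Real.exp (-x ^ 2)) = ENNReal.ofReal √Real.pi := by
    rw [← ofReal_integral_eq_lintegral_ofReal (by simpa using integrable_exp_neg_mul_sq one_pos)
      (.of_forall fun x => (Real.exp_pos _).le)]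
    simpa using congrArg ENNReal.ofReal (integral_gaussian 1)
  have hprod := lintegral_fin_prod_eq_prod (n := k) (μ := volume)
    (f := fun _ x => ENNReal.ofReal (Real.exp (-x ^ 2))) fun _ => by fun_prop
  simp only [← ENNReal.ofReal_prod_of_nonneg fun _ _ => (Real.exp_pos _).le, ← Real.exp_sum,
    Finset.sum_neg_distrib] at hprod
  rw [volume_pi, hprod, Finset.prod_const, hgauss, ← ENNReal.ofReal_pow (by positivity),
    Finset.card_fin, Real.sqrt_eq_rpow, ← Real.rpow_mul_natCast Real.pi_pos.le, one_div_mul_eq_div]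

lemma lintegral_comp_inv_smul {k : ℕ} {f : (Fin k → ℝ) → ℝ≥0∞} (hf : Measurable f) {r : ℝ}
    (hr : 0 < r) : ∫⁻ v, f (r⁻¹ • v) = ENNReal.ofReal (r ^ k) * ∫⁻ v, f v := by
  rw [← lintegral_map hf (measurable_const_smul r⁻¹),
    Measure.map_addHaar_smul volume (inv_ne_zero hr.ne'), lintegral_smul_measure]
  simp [abs_of_pos hr]

/-- The truncated power `x₊ ^ m`, which vanishes for `x ≤ 0` even when `m = 0`. -/
noncomputable def truncPow (m : ℕ) (x : ℝ) : ℝ := if 0 < x then x ^ m else 0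

@[fun_prop] lemma measurable_truncPow (m : ℕ) : Measurable (truncPow m) :=
  Measurable.ite measurableSet_Ioi (by fun_prop) measurable_const

lemma truncPow_mul (m : ℕ) {c : ℝ} (hc : 0 < c) (x : ℝ) :
    truncPow m (c * x) = c ^ m * truncPow m x := by
  simp only [truncPow, mul_pos_iff_of_pos_left hc, mul_pow, mul_ite, mul_zero]

lemma monotone_truncPow (m : ℕ) : Monotone (truncPow m) := by
  intro x y h
  unfold truncPow
  split_ifs with hx hy hy
  · gcongr
  · exact absurd (hx.trans_le h) hy
  · positivity
  · exact le_rfl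

/-- The integral of `(c - ‖v‖²)₊ ^ m` over `k`-dimensional Euclidean space. -/
noncomputable def ballIntegral (m k : ℕ) (c : ℝ) : ℝ≥0∞ :=
  ∫⁻ v : Fin k → ℝ, ENNReal.ofReal (truncPow m (c - ∑ i, v i ^ 2))

lemma ballIntegral_of_nonpos (m k : ℕ) {c : ℝ} (hc : c ≤ 0) : ballIntegral m k c = 0 := by
  have hzero : ∀ v : Fin k → ℝ, truncPow m (c - ∑ i, v i ^ 2) = 0 := fun v =>
    if_neg (by linarith [Finset.sum_nonneg fun i (_ : i ∈ Finset.univ) => sq_nonneg (v i)])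
  simp [ballIntegral, hzero]

lemma ballIntegral_sq (m k : ℕ) {r : ℝ} (hr : 0 < r) :
    ballIntegral m k (r ^ 2) = ENNReal.ofReal (r ^ (2 * m + k)) * ballIntegral m k 1 := by
  have hcomp : ∀ v : Fin k → ℝ, truncPow m (r ^ 2 - ∑ i, v i ^ 2) =
      r ^ (2 * m) * truncPow m (1 - ∑ i, (r⁻¹ • v) i ^ 2) := by
    intro v
    rw [pow_mul, ← truncPow_mul m (by positivity), mul_sub, Finset.mul_sum]
    simp only [Pi.smul_apply, smul_eq_mul, mul_pow, inv_pow]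
    field_simp
  simp only [ballIntegral, hcomp, ENNReal.ofReal_mul (pow_nonneg hr.le _)]
  rw [lintegral_const_mul _ (by fun_prop), pow_add, ENNReal.ofReal_mul (by positivity), mul_assoc,
    lintegral_comp_inv_smul (f := fun v => ENNReal.ofReal (truncPow m (1 - ∑ i, v i ^ 2)))
      (by fun_prop) hr]

lemma ballIntegral_eq_rpow_mul (m k : ℕ) {c : ℝ} (hc : 0 < c) :
    ballIntegral m k c = ENNReal.ofReal (c ^ ((m : ℝ) + k / 2)) * ballIntegral m k 1 := by
  have hpow : c ^ ((m : ℝ) + k / 2) = √c ^ (2 * m + k) := by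
    rw [Real.sqrt_eq_rpow, ← Real.rpow_mul_natCast hc.le]
    push_cast
    ring_nf
  rw [hpow, ← ballIntegral_sq m k (Real.sqrt_pos.2 hc), Real.sq_sqrt hc.le]

lemma lintegral_exp_neg_mul_truncPow_sub (m : ℕ) (a : ℝ) :
    ∫⁻ r, ENNReal.ofReal (Real.exp (-r)) * ENNReal.ofReal (truncPow m (r - a)) =
      ENNReal.ofReal (Real.exp (-a)) * m.factorial := by
  rw [← lintegral_add_right_eq_self _ a, ← lintegral_exp_neg_mul_pow,
    ← lintegral_const_mul _ (by fun_prop), ← lintegral_indicator measurableSet_Ioi]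
  refine lintegral_congr fun r => ?_
  by_cases hr : 0 < r
  · rw [indicator_of_mem (mem_Ioi.2 hr), add_sub_cancel_right, truncPow, if_pos hr,
      neg_add_rev, Real.exp_add, ENNReal.ofReal_mul (Real.exp_pos _).le,
      ENNReal.ofReal_mul (Real.exp_pos _).le, mul_assoc]
  · rw [indicator_of_notMem (by simpa using hr), add_sub_cancel_right, truncPow, if_neg hr,
      ENNReal.ofReal_zero, mul_zero]

lemma lintegral_exp_neg_mul_ballIntegral (m k : ℕ) :
    ∫⁻ r in Ioi 0, ENNReal.ofReal (Real.exp (-r)) * ballIntegral m k r =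
      ENNReal.ofReal (Real.pi ^ ((k : ℝ) / 2)) * m.factorial := by
  rw [← lintegral_exp_neg_sum_sq, ← lintegral_mul_const _ (by fun_prop)]
  simp only [← lintegral_exp_neg_mul_truncPow_sub]
  rw [lintegral_lintegral_swap (by fun_prop), setLIntegral_eq_of_support_subset]
  · simp only [ballIntegral, lintegral_const_mul' _ _ ENNReal.ofReal_ne_top]
  · intro r hr
    contrapose! hr
    simp [ballIntegral_of_nonpos m k (not_lt.1 hr)]

/-- Both sides of the layer-cake identity `lintegral_exp_neg_mul_ballIntegral` are Gaussian
integrals, which is how the constant is found. -/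
lemma ballIntegral_one (m k : ℕ) :
    ballIntegral m k 1 =
      ENNReal.ofReal (Real.pi ^ ((k : ℝ) / 2) * m.factorial / Real.Gamma (m + k / 2 + 1)) := by
  have hG : 0 < Real.Gamma ((m : ℝ) + k / 2 + 1) := Real.Gamma_pos_of_pos (by positivity)
  have hrpow : ∀ r ∈ Ioi (0 : ℝ), ENNReal.ofReal (Real.exp (-r)) * ballIntegral m k r =
      ENNReal.ofReal (Real.exp (-(1 * r)) * r ^ ((m : ℝ) + k / 2)) * ballIntegral m k 1 := by
    intro r hr
    rw [ballIntegral_eq_rpow_mul m k hr, ENNReal.ofReal_mul (Real.exp_pos _).le, one_mul, mul_assoc]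
  have hlayer := lintegral_exp_neg_mul_ballIntegral m k
  rw [setLIntegral_congr_fun measurableSet_Ioi hrpow, lintegral_mul_const _ (by fun_prop),
    lintegral_exp_neg_mul_rpow (by linarith [show 0 ≤ (m : ℝ) + k / 2 by positivity]) one_pos,
    Real.one_rpow, div_one] at hlayer
  rw [ENNReal.ofReal_div_of_pos hG, ENNReal.ofReal_mul (by positivity), ENNReal.ofReal_natCast,
    ← hlayer, mul_comm, ENNReal.mul_div_cancel_right (by simpa using hG) ENNReal.ofReal_ne_top]

end BallIntegral

section OrthantIntegral

open MeasureTheory Set ENNReal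

lemma sum_offDiag_mul {ι : Type*} [Fintype ι] (s : ι → ℝ) :
    ∑ p ∈ Finset.univ.offDiag, s p.1 * s p.2 = (∑ i, s i) ^ 2 - ∑ i, s i ^ 2 := by
  classical
  rw [eq_sub_iff_add_eq, add_comm, sq, Finset.sum_mul_sum, ← Finset.sum_product',
    ← Finset.diag_union_offDiag, Finset.sum_union (Finset.disjoint_diag_offDiag _),
    Finset.sum_diag]
  simp only [sq]

lemma sum_isLoopless_prod {m k : ℕ} [DecidablePred (IsLoopless (m := m) (k := k))]
    (s : Fin (k + 1) → ℝ) :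
    ∑ c : Fin m × Bool → Fin (k + 1) with IsLoopless c, ∏ l, s (c l) =
      ((∑ i, s i) ^ 2 - ∑ i, s i ^ 2) ^ m := by
  rw [← sum_offDiag_mul, ← Fin.prod_const, Finset.prod_univ_sum]
  refine Finset.sum_bij' (fun c _ j => (c (j, true), c (j, false)))
    (fun p _ l => bif l.2 then (p l.1).1 else (p l.1).2) ?_ ?_ ?_ ?_ ?_
  · intro c hc
    rw [Finset.mem_filter_univ] at hc
    exact Fintype.mem_piFinset.2 fun j => Finset.mem_offDiag.2
      ⟨Finset.mem_univ _, Finset.mem_univ _, hc (j, false)⟩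
  · intro p hp
    simp only [Fintype.mem_piFinset, Finset.mem_offDiag] at hp
    rw [Finset.mem_filter_univ]
    rintro ⟨j, _ | _⟩
    exacts [(hp j).2.2, (hp j).2.2.symm]
  · rintro c -
    ext ⟨j, b⟩
    cases b <;> rfl
  · exact fun p _ => rfl
  · exact fun c _ => by simp only [Fintype.prod_prod_type, Fintype.prod_bool]

/-- The set of tuples with positive coordinates, over which the weights of the gaps of a labelling
are integrated. -/
def orthant (k : ℕ) : Set (Fin k → ℝ) := univ.pi fun _ => Ioi 0

lemma mem_orthant {k : ℕ} {s : Fin k → ℝ} : s ∈ orthant k ↔ ∀ i, 0 < s i := by simp [orthant]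

lemma measurableSet_orthant (k : ℕ) : MeasurableSet (orthant k) :=
  .univ_pi fun _ => measurableSet_Ioi

lemma setLIntegral_orthant_exp_mul_prod {k : ℕ} {ι : Type*} [Fintype ι] (c : ι → Fin k) :
    ∫⁻ s in orthant k, ENNReal.ofReal (Real.exp (-∑ i, s i) * ∏ l, s (c l)) =
      ∏ i, ((Fintype.card {l // c l = i}).factorial : ℝ≥0∞) := by
  simp only [← lintegral_exp_neg_mul_pow]
  rw [← lintegral_fin_prod_eq_prod fun i => by fun_prop, ← Measure.restrict_pi_pi, ← volume_pi]
  refine setLIntegral_congr_fun (measurableSet_orthant k) fun s hs => ?_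
  rw [mem_orthant] at hs
  rw [← ENNReal.ofReal_prod_of_nonneg fun i _ =>
    mul_nonneg (Real.exp_pos _).le (pow_nonneg (hs i).le _), Finset.prod_mul_distrib,
    ← Real.exp_sum, Finset.sum_neg_distrib, ← Fintype.prod_fiberwise c]
  congr! 3 with i
  rw [Fintype.prod_congr _ (fun _ => s i) fun l => by rw [l.2], Finset.prod_const,
    Finset.card_univ]

theorem R_mul_eq_setLIntegral_orthant (m k : ℕ) :
    (R (m + k) k * (m.factorial * 2 ^ m) : ℝ≥0∞) = ∫⁻ s in orthant (k + 1),
      ENNReal.ofReal (Real.exp (-∑ i, s i) * ((∑ i, s i) ^ 2 - ∑ i, s i ^ 2) ^ m) := by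
  classical
  have hcount := congrArg (Nat.cast (R := ℝ≥0∞)) (R_mul_eq_sum_isLoopless m k)
  push_cast at hcount
  simp only [hcount, ← setLIntegral_orthant_exp_mul_prod]
  rw [← lintegral_finsetSum _ fun c _ => by fun_prop]
  refine setLIntegral_congr_fun (measurableSet_orthant _) fun s hs => ?_
  rw [mem_orthant] at hs
  rw [← ENNReal.ofReal_sum_of_nonneg fun c _ =>
    mul_nonneg (Real.exp_pos _).le (Finset.prod_nonneg fun l _ => (hs _).le), ← Finset.mul_sum,
    sum_isLoopless_prod]

end OrthantIntegral

section ConeIntegral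

open MeasureTheory Set ENNReal

/-- The integrand of `R_mul_eq_setLIntegral_orthant` (the case `B = 1`), extended from the orthant
to the circular cone `∑ i, s i ^ 2 < B * (∑ i, s i) ^ 2`, `0 < ∑ i, s i`. -/
noncomputable def coneDensity (m k : ℕ) (B : ℝ) (s : Fin (k + 1) → ℝ) : ℝ≥0∞ :=
  if 0 < ∑ i, s i then
    ENNReal.ofReal (Real.exp (-∑ i, s i) * truncPow m (B * (∑ i, s i) ^ 2 - ∑ i, s i ^ 2))
  else 0

/-- The total mass of `coneDensity`. -/
noncomputable def coneIntegral (m k : ℕ) (B : ℝ) : ℝ≥0∞ := ∫⁻ s, coneDensity m k B s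

lemma measurable_coneDensity (m k : ℕ) (B : ℝ) : Measurable (coneDensity m k B) :=
  Measurable.ite (measurableSet_lt measurable_const (by fun_prop)) (by fun_prop) measurable_const

lemma coneDensity_le_coneDensity {m k : ℕ} {B C : ℝ} {s t : Fin (k + 1) → ℝ}
    (hsum : ∑ i, s i = ∑ i, t i)
    (h : 0 < ∑ i, t i →
      B * (∑ i, t i) ^ 2 - ∑ i, s i ^ 2 ≤ C * (∑ i, t i) ^ 2 - ∑ i, t i ^ 2) :
    coneDensity m k B s ≤ coneDensity m k C t := by
  unfold coneDensity
  rw [hsum]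
  split_ifs with hpos
  · exact ENNReal.ofReal_le_ofReal
      (mul_le_mul_of_nonneg_left (monotone_truncPow m (h hpos)) (Real.exp_pos _).le)
  · exact le_rfl

lemma sum_sq_lt_sq_sum {ι : Type*} [Fintype ι] [Nontrivial ι] {s : ι → ℝ} (hs : ∀ i, 0 < s i) :
    ∑ i, s i ^ 2 < (∑ i, s i) ^ 2 := by
  rw [sq (∑ i, s i), Finset.sum_mul]
  refine Finset.sum_lt_sum_of_nonempty Finset.univ_nonempty fun i _ => ?_
  obtain ⟨j, hj⟩ := exists_ne i
  rw [sq]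
  exact mul_lt_mul_of_pos_left (Finset.single_lt_sum hj (Finset.mem_univ _) (Finset.mem_univ _)
    (hs j) fun l _ _ => (hs l).le) (hs i)

lemma R_mul_eq_setLIntegral_coneDensity (m : ℕ) {k : ℕ} (hk : 1 ≤ k) :
    (R (m + k) k * (m.factorial * 2 ^ m) : ℝ≥0∞) =
      ∫⁻ s in orthant (k + 1), coneDensity m k 1 s := by
  have : Nontrivial (Fin (k + 1)) := Fin.nontrivial_iff_two_le.2 (by omega)
  rw [R_mul_eq_setLIntegral_orthant]
  refine setLIntegral_congr_fun (measurableSet_orthant _) fun s hs => ?_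
  rw [mem_orthant] at hs
  have hsq := sum_sq_lt_sq_sum hs
  rw [coneDensity, if_pos (Finset.sum_pos (fun i _ => hs i) Finset.univ_nonempty), truncPow,
    if_pos (by linarith), one_mul]

theorem R_mul_le_coneIntegral (m : ℕ) {k : ℕ} (hk : 1 ≤ k) :
    (R (m + k) k * (m.factorial * 2 ^ m) : ℝ≥0∞) ≤ coneIntegral m k 1 := by
  rw [R_mul_eq_setLIntegral_coneDensity m hk]
  exact setLIntegral_le_lintegral _ _

/-- The direction of a shear fixing `∑ i, s i`. Its length is chosen so that the shear maps the half
of the cone where `s j ≤ 0` into the narrower cone of `setLIntegral_coneDensity_le`. -/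
noncomputable def shearDir (k : ℕ) (j : Fin (k + 1)) : Fin (k + 1) → ℝ :=
  fun i => (1 / (k : ℝ)) * ((if i = j then 1 else 0) - 1 / ((k : ℝ) + 1))

section Shear

variable {k : ℕ} (j : Fin (k + 1))

lemma sum_mul_shearDir (s : Fin (k + 1) → ℝ) :
    ∑ i, s i * shearDir k j i = (1 / (k : ℝ)) * (s j - (∑ i, s i) / (k + 1)) := by
  have hterm : ∀ i, s i * shearDir k j i =
      (1 / (k : ℝ)) * ((if i = j then s i else 0) - s i / (k + 1)) := fun i => by
    rw [shearDir]
    split_ifs <;> ring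
  simp only [hterm, ← Finset.mul_sum, Finset.sum_sub_distrib, ← Finset.sum_div, Finset.sum_ite_eq',
    Finset.mem_univ, if_true]

lemma sum_shearDir : ∑ i, shearDir k j i = 0 := by
  have hsum := sum_mul_shearDir j fun _ => 1
  rw [Fin.sum_const, nsmul_one, Nat.cast_succ, div_self (by positivity), sub_self, mul_zero] at hsum
  simpa using hsum

lemma sum_shearDir_sq (hk : k ≠ 0) : ∑ i, shearDir k j i ^ 2 = 1 / ((k : ℝ) * (k + 1)) := by
  simp only [sq, sum_mul_shearDir, sum_shearDir]
  simp only [shearDir, if_true]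
  field_simp
  ring

lemma sum_add_smul_shearDir (s : Fin (k + 1) → ℝ) (c : ℝ) :
    ∑ i, (s + c • shearDir k j) i = ∑ i, s i := by
  simp [Finset.sum_add_distrib, ← Finset.mul_sum, sum_shearDir]

lemma sum_add_smul_shearDir_sq (hk : k ≠ 0) (s : Fin (k + 1) → ℝ) :
    ∑ i, (s + (∑ i, s i) • shearDir k j) i ^ 2 =
      ∑ i, s i ^ 2 + 2 * (∑ i, s i) * s j / k - (∑ i, s i) ^ 2 / (k * (k + 1)) := by
  have hexp : ∀ i, (s + (∑ i, s i) • shearDir k j) i ^ 2 = s i ^ 2 +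
      2 * (∑ i, s i) * (s i * shearDir k j i) + (∑ i, s i) ^ 2 * shearDir k j i ^ 2 := fun i => by
    simp only [Pi.add_apply, Pi.smul_apply, smul_eq_mul]
    ring
  simp only [hexp, Finset.sum_add_distrib, ← Finset.mul_sum, sum_mul_shearDir, sum_shearDir_sq j hk]
  field_simp
  ring

lemma measurePreserving_add_smul_shearDir :
    MeasurePreserving fun s : Fin (k + 1) → ℝ => s + (∑ i, s i) • shearDir k j := by
  let f : Module.Dual ℝ (Fin (k + 1) → ℝ) := ∑ i, LinearMap.proj i
  have hf : ∀ s, f s = ∑ i, s i := fun s => by simp [f]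
  have hdet : LinearMap.det (LinearMap.transvection f (shearDir k j)) = 1 := by
    rw [LinearMap.transvection.det, hf, sum_shearDir, add_zero]
  have hmap := Measure.map_linearMap_addHaar_eq_smul_addHaar volume (hdet ▸ one_ne_zero)
  rw [hdet, inv_one, abs_one, ENNReal.ofReal_one, one_smul] at hmap
  refine ⟨by fun_prop, (congrArg (Measure.map · volume) (funext fun s => ?_)).trans hmap⟩
  rw [LinearMap.transvection.apply, hf]

lemma setLIntegral_coneDensity_le (m : ℕ) (hk : k ≠ 0) :
    ∫⁻ s in {s | s j ≤ 0}, coneDensity m k 1 s ≤ coneIntegral m k (1 - 1 / (k * (k + 1))) := by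
  have hmono : ∀ s ∈ {s : Fin (k + 1) → ℝ | s j ≤ 0}, coneDensity m k 1 s ≤
      coneDensity m k (1 - 1 / (k * (k + 1))) (s + (∑ i, s i) • shearDir k j) := by
    intro s (hs : s j ≤ 0)
    refine coneDensity_le_coneDensity (sum_add_smul_shearDir j s _).symm ?_
    rw [sum_add_smul_shearDir, sum_add_smul_shearDir_sq j hk]
    intro hpos
    have hneg : 2 * (∑ i, s i) * s j / k ≤ 0 :=
      div_nonpos_of_nonpos_of_nonneg (mul_nonpos_of_nonneg_of_nonpos (by positivity) hs)
        k.cast_nonneg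
    rw [sub_mul, one_div_mul_eq_div]
    linarith
  rw [coneIntegral, ← (measurePreserving_add_smul_shearDir j).lintegral_comp
    (measurable_coneDensity _ _ _)]
  exact (setLIntegral_mono' (measurableSet_le (by fun_prop) measurable_const) hmono).trans
    (setLIntegral_le_lintegral _ _)

end Shear

theorem coneIntegral_le (m : ℕ) {k : ℕ} (hk : 1 ≤ k) :
    coneIntegral m k 1 ≤ R (m + k) k * (m.factorial * 2 ^ m) +
      (k + 1) * coneIntegral m k (1 - 1 / (k * (k + 1))) := by
  rw [R_mul_eq_setLIntegral_coneDensity m hk]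
  have hcover : orthant (k + 1) ∪ ⋃ j, {s | s j ≤ 0} = univ := by
    refine eq_univ_of_forall fun s => ?_
    rw [mem_union, mem_orthant, mem_iUnion]
    exact (forall_or_exists_not fun i => 0 < s i).imp_right fun ⟨j, hj⟩ => ⟨j, not_lt.1 hj⟩
  calc coneIntegral m k 1
      = ∫⁻ s in orthant (k + 1) ∪ ⋃ j, {s | s j ≤ 0}, coneDensity m k 1 s := by
        rw [hcover, setLIntegral_univ, coneIntegral]
    _ ≤ (∫⁻ s in orthant (k + 1), coneDensity m k 1 s) +
          ∑ j, ∫⁻ s in {s : Fin (k + 1) → ℝ | s j ≤ 0}, coneDensity m k 1 s := by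
        refine (lintegral_union_le _ _ _).trans ?_
        gcongr
        exact (lintegral_iUnion_le _ _).trans_eq (tsum_fintype _)
    _ ≤ _ := by
        gcongr
        refine (Finset.sum_le_sum fun j _ =>
          setLIntegral_coneDensity_le j m (Nat.one_le_iff_ne_zero.1 hk)).trans ?_
        simp

/-- A reflection turning the axis of the cone into the first coordinate axis. -/
lemma exists_measurePreserving_sum_eq (k : ℕ) :
    ∃ T : (Fin (k + 1) → ℝ) → Fin (k + 1) → ℝ, MeasurePreserving T ∧
      ∀ s, ∑ i, T s i ^ 2 = ∑ i, s i ^ 2 ∧ ∑ i, s i = √(k + 1) * T s 0 := by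
  let u : EuclideanSpace ℝ (Fin (k + 1)) := WithLp.toLp 2 fun _ => 1
  let e : EuclideanSpace ℝ (Fin (k + 1)) := EuclideanSpace.single 0 √(k + 1)
  have hnorm : ‖u‖ = ‖e‖ := by
    rw [EuclideanSpace.norm_eq, PiLp.norm_single]
    simp [u, abs_of_nonneg (Real.sqrt_nonneg _)]
  let T := ((ℝ ∙ (u - e))ᗮ).reflection
  have hT : T u = e := Submodule.reflection_sub hnorm
  refine ⟨fun s => (T (WithLp.toLp 2 s)).ofLp, (PiLp.volume_preserving_ofLp _).comp
    (T.measurePreserving.comp (PiLp.volume_preserving_toLp _)), fun s => ⟨?_, ?_⟩⟩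
  · rw [← EuclideanSpace.real_norm_sq_eq, T.norm_map, EuclideanSpace.real_norm_sq_eq]
  · have hinner := T.inner_map_map u (WithLp.toLp 2 s)
    rw [hT, EuclideanSpace.inner_single_left] at hinner
    simpa [PiLp.inner_apply, u] using hinner.symm

/-- The density `coneDensity m k B`, with `b = B * (k + 1) - 1`, at the point with coordinate `x`
along the axis of the cone and coordinates `v` orthogonal to it. -/
noncomputable def axialDensity (m k : ℕ) (b : ℝ) (x : ℝ) (v : Fin k → ℝ) : ℝ≥0∞ :=
  if 0 < x then ENNReal.ofReal (Real.exp (-(√(k + 1) * x)) * truncPow m (b * x ^ 2 - ∑ i, v i ^ 2))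
  else 0

lemma coneDensity_eq_axialDensity {m k : ℕ} (B : ℝ) {s t : Fin (k + 1) → ℝ}
    (hsq : ∑ i, t i ^ 2 = ∑ i, s i ^ 2) (hsum : ∑ i, s i = √(k + 1) * t 0) :
    coneDensity m k B s = axialDensity m k (B * (k + 1) - 1) (t 0) (fun i => t i.succ) := by
  rw [Fin.sum_univ_succ] at hsq
  have hdiff : B * (√(k + 1) * t 0) ^ 2 - ∑ i, s i ^ 2 =
      (B * (k + 1) - 1) * t 0 ^ 2 - ∑ i : Fin k, t i.succ ^ 2 := by
    rw [← hsq, mul_pow, Real.sq_sqrt (by positivity)]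
    ring
  simp only [coneDensity, axialDensity, hsum, hdiff, mul_pos_iff_of_pos_left
    (Real.sqrt_pos.2 (by positivity : (0 : ℝ) < k + 1))]

lemma lintegral_axialDensity (m k : ℕ) {b : ℝ} (hb : 0 < b) :
    ∀ x, ∫⁻ v, axialDensity m k b x v = (Ioi 0).indicator (fun x =>
      ENNReal.ofReal (Real.exp (-(√(k + 1) * x)) * x ^ ((2 * m + k : ℕ) : ℝ)) *
        ballIntegral m k b) x := by
  intro x
  by_cases hx : 0 < x
  · have hsq : b * x ^ 2 = (√b * x) ^ 2 := by rw [mul_pow, Real.sq_sqrt hb.le]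
    simp only [axialDensity, if_pos hx, ENNReal.ofReal_mul (Real.exp_pos _).le]
    rw [lintegral_const_mul _ (by fun_prop), indicator_of_mem (mem_Ioi.2 hx), ← ballIntegral, hsq,
      ballIntegral_sq m k (by positivity), mul_pow, ENNReal.ofReal_mul (by positivity),
      mul_comm (ENNReal.ofReal (√b ^ _)), mul_assoc (ENNReal.ofReal (x ^ _)),
      ← ballIntegral_sq m k (Real.sqrt_pos.2 hb), Real.sq_sqrt hb.le, mul_assoc, Real.rpow_natCast]
  · simp [axialDensity, hx]

theorem coneIntegral_eq (m k : ℕ) {B : ℝ} (hB : 1 < B * (k + 1)) :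
    coneIntegral m k B = ENNReal.ofReal ((2 * m + k).factorial / √(k + 1) ^ (2 * m + k + 1)) *
      ballIntegral m k (B * (k + 1) - 1) := by
  obtain ⟨T, hTmeas, hT⟩ := exists_measurePreserving_sum_eq k
  let b := B * (k + 1) - 1
  have hmeas : Measurable fun p : ℝ × (Fin k → ℝ) => axialDensity m k b p.1 p.2 :=
    Measurable.ite (measurableSet_lt measurable_const measurable_fst) (by fun_prop) measurable_const
  let split := MeasurableEquiv.piFinSuccAbove (fun _ : Fin (k + 1) => ℝ) 0
  calc coneIntegral m k B
      = ∫⁻ s, axialDensity m k b (split (T s)).1 (split (T s)).2 :=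
        lintegral_congr fun s => coneDensity_eq_axialDensity B (hT s).1 (hT s).2
    _ = ∫⁻ p : ℝ × (Fin k → ℝ), axialDensity m k b p.1 p.2 := by
        rw [hTmeas.lintegral_comp (f := fun t => axialDensity m k b (split t).1 (split t).2)
          (hmeas.comp split.measurable)]
        exact (volume_preserving_piFinSuccAbove (fun _ : Fin (k + 1) => ℝ) 0).lintegral_comp hmeas
    _ = ∫⁻ x in Ioi 0, ENNReal.ofReal (Real.exp (-(√(k + 1) * x)) * x ^ ((2 * m + k : ℕ) : ℝ)) *
          ballIntegral m k b := by
        rw [Measure.volume_eq_prod, lintegral_prod _ hmeas.aemeasurable,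
          ← lintegral_indicator measurableSet_Ioi]
        exact lintegral_congr (lintegral_axialDensity m k (by linarith))
    _ = _ := by
        rw [lintegral_mul_const _ (by fun_prop), lintegral_exp_neg_mul_rpow
          (by linarith [(2 * m + k).cast_nonneg (α := ℝ)]) (by positivity),
          Real.Gamma_nat_eq_factorial, ← Nat.cast_succ (2 * m + k), Real.rpow_natCast]

end ConeIntegral

section ConeCount

open MeasureTheory Set

/-- The number that `R n k` becomes when the integral over the orthant is replaced by the integral
over the circumscribed cone. -/
noncomputable def coneCount (n k : ℕ) : ℝ :=
  2 ^ n * Real.pi ^ (((k : ℝ) - 1) / 2) * Real.Gamma (n - (k - 1) / 2) *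
    (k : ℝ) ^ ((n : ℝ) - k / 2) / ((k : ℝ) + 1) ^ ((n : ℝ) - (k - 1) / 2)

lemma Gamma_pos_of_le {n k : ℕ} (hk : 1 ≤ k) (hkn : k ≤ n) :
    0 < Real.Gamma ((n : ℝ) - (k - 1) / 2) := by
  have hk' : (1 : ℝ) ≤ k := mod_cast hk
  have hkn' : (k : ℝ) ≤ n := mod_cast hkn
  exact Real.Gamma_pos_of_pos (by linarith)

lemma coneCount_pos {n k : ℕ} (hk : 1 ≤ k) (hkn : k ≤ n) : 0 < coneCount n k := by
  have hG := Gamma_pos_of_le hk hkn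
  unfold coneCount
  positivity

/-- The duplication formula for `Γ`, at the argument that pairs the radial and the transversal
factor of `coneIntegral_eq`. -/
lemma factorial_two_mul_add_eq (m k : ℕ) :
    ((2 * m + k).factorial : ℝ) = 2 ^ (2 * m + k) * Real.Gamma (m + k / 2 + 1 / 2) *
      Real.Gamma (m + k / 2 + 1) / √Real.pi := by
  have hdup := Real.Gamma_mul_Gamma_add_half ((m : ℝ) + k / 2 + 1 / 2)
  have harg : 2 * ((m : ℝ) + k / 2 + 1 / 2) = (2 * m + k : ℕ) + 1 := by push_cast; ring
  rw [harg, sub_add_cancel_right, Real.rpow_neg two_pos.le, Real.rpow_natCast,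
    Real.Gamma_nat_eq_factorial, add_assoc (_ + _) (1 / 2 : ℝ), add_halves] at hdup
  rw [mul_assoc, hdup]
  field_simp

lemma coneIntegral_one_constant_eq (m : ℕ) {k : ℕ} (hk : 1 ≤ k) :
    (2 * m + k).factorial / √(k + 1) ^ (2 * m + k + 1) *
      ((k : ℝ) ^ ((m : ℝ) + k / 2) *
        (Real.pi ^ ((k : ℝ) / 2) * m.factorial / Real.Gamma (m + k / 2 + 1))) =
      coneCount (m + k) k * (m.factorial * 2 ^ m) := by
  have hsqrt : √((k : ℝ) + 1) ^ (2 * m + k + 1) = ((k : ℝ) + 1) ^ ((m : ℝ) + k / 2 + 1 / 2) := by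
    rw [Real.sqrt_eq_rpow, ← Real.rpow_mul_natCast (by positivity)]
    push_cast
    ring_nf
  have hpi : Real.pi ^ (((k : ℝ) - 1) / 2) = Real.pi ^ ((k : ℝ) / 2) / √Real.pi := by
    rw [sub_div, Real.rpow_sub Real.pi_pos, Real.sqrt_eq_rpow]
  have hx : ((m + k : ℕ) : ℝ) - k / 2 = m + k / 2 := by push_cast; ring
  have hy : ((m + k : ℕ) : ℝ) - (k - 1) / 2 = m + k / 2 + 1 / 2 := by push_cast; ring
  rw [coneCount, hsqrt, hpi, hx, hy, factorial_two_mul_add_eq]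
  field_simp
  ring

lemma coneIntegral_eq_coneCount (m : ℕ) {k : ℕ} {B : ℝ} (hk : 1 ≤ k) (hB : 1 < B * (k + 1)) :
    coneIntegral m k B = ENNReal.ofReal (((B * (k + 1) - 1) / k) ^ ((m : ℝ) + k / 2) *
      (coneCount (m + k) k * (m.factorial * 2 ^ m))) := by
  have hk' : (0 : ℝ) < k := mod_cast hk
  have hb : 0 < B * (k + 1) - 1 := by linarith
  have hbk : B * (k + 1) - 1 = (B * (k + 1) - 1) / k * k := (div_mul_cancel₀ _ hk'.ne').symm
  rw [coneIntegral_eq m k hB, ballIntegral_eq_rpow_mul m k hb, ballIntegral_one,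
    ← ENNReal.ofReal_mul (by positivity), ← ENNReal.ofReal_mul (by positivity),
    ← coneIntegral_one_constant_eq m hk]
  nth_rw 1 [hbk, Real.mul_rpow (by positivity) hk'.le]
  congr 1
  ring

theorem R_le_coneCount {n k : ℕ} (hk : 1 ≤ k) (hkn : k ≤ n) : (R n k : ℝ) ≤ coneCount n k := by
  obtain ⟨m, rfl⟩ := Nat.exists_eq_add_of_le' hkn
  have hk' : (0 : ℝ) < k := mod_cast hk
  have hpos := coneCount_pos hk hkn
  have hle := R_mul_le_coneIntegral m hk
  rw [coneIntegral_eq_coneCount m hk (by linarith), one_mul, add_sub_cancel_right,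
    div_self hk'.ne', Real.one_rpow, one_mul,
    ENNReal.le_ofReal_iff_toReal_le (by finiteness) (by positivity)] at hle
  refine le_of_mul_le_mul_right ?_ (by positivity : (0 : ℝ) < m.factorial * 2 ^ m)
  simpa using hle

theorem coneCount_mul_le_R {n k : ℕ} (hk : 2 ≤ k) (hkn : k ≤ n) :
    coneCount n k * (1 - (k + 1) * (1 - 1 / (k : ℝ) ^ 2) ^ ((n : ℝ) - k / 2)) ≤ R n k := by
  obtain ⟨m, rfl⟩ := Nat.exists_eq_add_of_le' hkn
  have hk' : (2 : ℝ) ≤ k := mod_cast hk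
  have hpos := coneCount_pos (by omega) hkn
  have hB : (1 - 1 / ((k : ℝ) * (k + 1))) * (k + 1) - 1 = (1 - 1 / (k : ℝ) ^ 2) * k := by
    field_simp
    ring
  have hsq : 0 < 1 - 1 / (k : ℝ) ^ 2 := by
    rw [sub_pos, div_lt_one (by positivity)]
    nlinarith
  have hx : ((m + k : ℕ) : ℝ) - k / 2 = m + k / 2 := by push_cast; ring
  have hle := coneIntegral_le m (by omega : 1 ≤ k)
  rw [coneIntegral_eq_coneCount m (by omega) (by linarith), one_mul, add_sub_cancel_right,
    div_self (by positivity), Real.one_rpow, one_mul,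
    coneIntegral_eq_coneCount m (by omega) (by linarith [mul_pos hsq (by linarith : (0 : ℝ) < k)]),
    hB, mul_div_cancel_right₀ _ (by positivity), ENNReal.ofReal_le_iff_le_toReal (by finiteness),
    ENNReal.toReal_add (by finiteness) (by finiteness)] at hle
  rw [hx]
  refine le_of_mul_le_mul_right ?_ (by positivity : (0 : ℝ) < m.factorial * 2 ^ m)
  have hk1 : ((k : ENNReal) + 1).toReal = k + 1 := by
    exact_mod_cast ENNReal.toReal_natCast (k + 1)
  have hpow : 0 ≤ (1 - 1 / (k : ℝ) ^ 2) ^ ((m : ℝ) + k / 2) *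
      (coneCount (m + k) k * (m.factorial * 2 ^ m)) := by positivity
  simp only [ENNReal.toReal_mul, ENNReal.toReal_natCast, ENNReal.toReal_pow, ENNReal.toReal_ofNat,
    hk1, ENNReal.toReal_ofReal hpow] at hle
  linarith

end ConeCount

section LogRatio

lemma neg_half_mul_log_le_log_Gamma_sub {x : ℝ} (hx : 0 < x) :
    -(1 / 2 * Real.log x) ≤ Real.log (Real.Gamma x) - Real.log (Real.Gamma (x + 1 / 2)) := by
  have hconv := Real.convexOn_log_Gamma.2 (Set.mem_Ioi.2 hx)
    (Set.mem_Ioi.2 (by linarith : 0 < x + 1)) one_half_pos.le one_half_pos.le (add_halves 1)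
  simp only [smul_eq_mul, Function.comp] at hconv
  rw [show 1 / 2 * x + 1 / 2 * (x + 1) = x + 1 / 2 by ring, Real.Gamma_add_one hx.ne',
    Real.log_mul hx.ne' (Real.Gamma_pos_of_pos hx).ne'] at hconv
  linarith

lemma log_Gamma_sub_le_neg_half_mul_log {x : ℝ} (hx : 0 < x) :
    Real.log (Real.Gamma (x + 1 / 2)) - Real.log (Real.Gamma (x + 1)) ≤
      -(1 / 2 * Real.log x) := by
  have hlower := neg_half_mul_log_le_log_Gamma_sub hx
  rw [Real.Gamma_add_one hx.ne', Real.log_mul hx.ne' (Real.Gamma_pos_of_pos hx).ne']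
  linarith

lemma log_sq_div_sq_sub_one {x : ℝ} (hx : 1 < x) :
    Real.log (x ^ 2 / (x ^ 2 - 1)) = 2 * Real.log x - Real.log (x - 1) - Real.log (x + 1) := by
  rw [show x ^ 2 - 1 = (x - 1) * (x + 1) by ring,
    Real.log_div (by positivity) (mul_pos (by linarith) (by linarith)).ne', Real.log_pow,
    Real.log_mul (by linarith) (by linarith)]
  push_cast
  ring

lemma one_div_sq_le_log {x : ℝ} (hx : 1 < x) : 1 / x ^ 2 ≤ Real.log (x ^ 2 / (x ^ 2 - 1)) := by
  have hx2 : 0 < x ^ 2 - 1 := by nlinarith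
  refine Eq.trans_le ?_ (Real.one_sub_inv_le_log_of_pos (by positivity))
  field_simp
  ring

lemma log_le_one_div_sq_sub_one {x : ℝ} (hx : 1 < x) :
    Real.log (x ^ 2 / (x ^ 2 - 1)) ≤ 1 / (x ^ 2 - 1) := by
  have hx2 : 0 < x ^ 2 - 1 := by nlinarith
  refine (Real.log_le_sub_one_of_pos (by positivity)).trans_eq ?_
  field_simp
  ring

lemma log_sub_le_log_sub_half {n x : ℝ} (hx : 0 < x) (hxn : x ≤ n) :
    Real.log n - x / n ≤ Real.log (n - x / 2) := by
  have hn : 0 < n := by linarith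
  have hy : 0 < n - x / 2 := by linarith
  have hlog := Real.one_sub_inv_le_log_of_pos (div_pos hy hn)
  rw [Real.log_div hy.ne' hn.ne', inv_div] at hlog
  have hdiv : n / (n - x / 2) ≤ 1 + x / n := by
    rw [div_le_iff₀ hy, ← sub_nonneg]
    have hid : (1 + x / n) * (n - x / 2) - n = x * (n - x) / (2 * n) := by field_simp; ring
    rw [hid]
    exact div_nonneg (mul_nonneg hx.le (by linarith)) (by linarith)
  linarith

/-- The number `λ` such that `k ↦ coneCount n k` peaks near the solution `k` of `n / k² = λ`. -/
noncomputable def logRate (n : ℕ) : ℝ := 1 / 2 * Real.log (n / Real.pi)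

lemma log_coneCount {n k : ℕ} (hk : 1 ≤ k) (hkn : k ≤ n) :
    Real.log (coneCount n k) = n * Real.log 2 + (k - 1) / 2 * Real.log Real.pi +
      Real.log (Real.Gamma (n - (k - 1) / 2)) + (n - k / 2) * Real.log k -
        (n - (k - 1) / 2) * Real.log (k + 1) := by
  have hk' : (0 : ℝ) < k := mod_cast hk
  have hG := Gamma_pos_of_le hk hkn
  have hpow : ∀ {x : ℝ} (a : ℝ), 0 < x → x ^ a ≠ 0 := fun a hx => (Real.rpow_pos_of_pos hx a).ne'
  have hpi := hpow ((k - 1) / 2) Real.pi_pos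
  have hnum := hpow ((n : ℝ) - k / 2) hk'
  rw [coneCount, Real.log_div (by positivity) (hpow _ (by positivity)),
    Real.log_mul (by positivity) hnum, Real.log_mul (by positivity) hG.ne',
    Real.log_mul (by positivity) hpi, Real.log_rpow hk', Real.log_rpow Real.pi_pos,
    Real.log_rpow (by positivity), Real.log_pow]

lemma log_coneCount_succ_sub {n k : ℕ} (hk : 1 ≤ k) (hkn : k + 1 ≤ n) :
    Real.log (coneCount n (k + 1)) - Real.log (coneCount n k) = 1 / 2 * Real.log Real.pi +
      (Real.log (Real.Gamma (n - k / 2)) - Real.log (Real.Gamma (n - k / 2 + 1 / 2))) +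
        (n - k / 2) * Real.log (((k : ℝ) + 1) ^ 2 / (((k : ℝ) + 1) ^ 2 - 1)) := by
  have hk' : (0 : ℝ) < k := mod_cast hk
  rw [log_sq_div_sq_sub_one (by linarith), log_coneCount hk (by omega),
    log_coneCount (by omega) hkn]
  push_cast
  ring_nf

theorem le_log_coneCount_succ_sub {n k : ℕ} (hk : 1 ≤ k) (hkn : k + 1 ≤ n) :
    n / ((k : ℝ) + 1) ^ 2 - logRate n - 1 / (2 * ((k : ℝ) + 1)) ≤
      Real.log (coneCount n (k + 1)) - Real.log (coneCount n k) := by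
  have hk' : (0 : ℝ) < k := mod_cast hk
  have hkn' : (k : ℝ) + 1 ≤ n := mod_cast hkn
  rw [log_coneCount_succ_sub hk hkn, logRate, Real.log_div (by linarith) Real.pi_pos.ne']
  have hGamma := neg_half_mul_log_le_log_Gamma_sub (x := n - k / 2) (by linarith)
  have hlog : Real.log (n - k / 2) ≤ Real.log n := Real.log_le_log (by linarith) (by linarith)
  have hmul := mul_le_mul_of_nonneg_left (one_div_sq_le_log (by linarith : 1 < (k : ℝ) + 1))
    (by linarith : 0 ≤ (n : ℝ) - k / 2)
  have hid : ((n : ℝ) - k / 2) * (1 / (k + 1) ^ 2) =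
      n / ((k : ℝ) + 1) ^ 2 - 1 / (2 * ((k : ℝ) + 1)) + 1 / (2 * ((k : ℝ) + 1) ^ 2) := by
    field_simp
    ring
  have hnonneg : 0 ≤ 1 / (2 * ((k : ℝ) + 1) ^ 2) := by positivity
  linarith

theorem log_coneCount_succ_sub_le {n k : ℕ} (hk : 1 ≤ k) (hkn : k + 1 ≤ n) :
    Real.log (coneCount n (k + 1)) - Real.log (coneCount n k) ≤
      n / (((k : ℝ) + 1) ^ 2 - 1) - logRate n + (k + 1) / (2 * n) := by
  have hk' : (0 : ℝ) < k := mod_cast hk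
  have hkn' : (k : ℝ) + 1 ≤ n := mod_cast hkn
  rw [log_coneCount_succ_sub hk hkn, logRate, Real.log_div (by linarith) Real.pi_pos.ne']
  have hGamma := log_Gamma_sub_le_neg_half_mul_log (x := n - (k + 1) / 2) (by linarith)
  rw [show (n : ℝ) - (k + 1) / 2 + 1 / 2 = n - k / 2 by ring,
    show (n : ℝ) - (k + 1) / 2 + 1 = n - k / 2 + 1 / 2 by ring] at hGamma
  have hlog := log_sub_le_log_sub_half (by positivity : 0 < (k : ℝ) + 1) hkn'
  have hmul := mul_le_mul_of_nonneg_left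
    (log_le_one_div_sq_sub_one (by linarith : 1 < (k : ℝ) + 1)) (by linarith : 0 ≤ (n : ℝ) - k / 2)
  have hle : ((n : ℝ) - k / 2) * (1 / ((k + 1) ^ 2 - 1)) ≤ n / (((k : ℝ) + 1) ^ 2 - 1) := by
    rw [mul_one_div]
    gcongr
    · nlinarith
    · linarith
  have hhalf : ((k : ℝ) + 1) / (2 * n) = 1 / 2 * (((k : ℝ) + 1) / n) := by
    rw [div_mul_eq_div_div_swap]
    ring
  linarith

end LogRatio

section Saddle

/-- The peak of a function with logarithmic derivative `x ↦ n / x² - l`: the derivative vanishes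
at `q`, and has slope `-1 / s²` there. The lower bounds put the parameters in the asymptotic
range. -/
structure IsSaddle (n l s q : ℝ) : Prop where
  two_le_rate : 2 ≤ l
  le_width : 100 ≤ s
  mode_eq : q = 2 * l * s ^ 2
  card_eq : n = l * q ^ 2

namespace IsSaddle

variable {n l s q x : ℝ} (h : IsSaddle n l s q)
include h

lemma rate_pos : 0 < l := by linarith [h.two_le_rate]

lemma width_pos : 0 < s := by linarith [h.le_width]

lemma four_mul_width_sq_le_mode : 4 * s ^ 2 ≤ q := by
  rw [h.mode_eq]
  nlinarith [h.two_le_rate]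

lemma mul_width_le_mode : 400 * s ≤ q := by
  nlinarith [h.four_mul_width_sq_le_mode, h.le_width]

lemma mode_pos : 0 < q := by linarith [h.mul_width_le_mode, h.le_width]

lemma two_mul_mode_le : 2 * q ≤ n := by
  have hq : 1 ≤ q := by linarith [h.mul_width_le_mode, h.le_width]
  rw [h.card_eq]
  nlinarith [h.two_le_rate]

lemma card_pos : 0 < n := by linarith [h.two_mul_mode_le, h.mode_pos]

lemma drift_add_eq (hx : 0 < x) :
    n / x ^ 2 - l + (x - q) / s ^ 2 = l * (x - q) ^ 2 * (q + 2 * x) / (q * x ^ 2) := by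
  have hs := h.width_pos
  have hl := h.rate_pos
  rw [h.card_eq, h.mode_eq]
  field_simp
  ring

lemma drift_add_nonneg (hx : 0 < x) : 0 ≤ n / x ^ 2 - l + (x - q) / s ^ 2 := by
  have hl := h.rate_pos
  have hq := h.mode_pos
  rw [h.drift_add_eq hx]
  positivity

lemma half_mode_le_and_le_of_abs_le {Y : ℝ} (hY : Y ≤ l * s) (hx : |x - q| ≤ Y * s) :
    q / 2 ≤ x ∧ x ≤ 2 * q := by
  have hs := h.width_pos
  have hYs : Y * s ≤ q / 2 := by
    rw [h.mode_eq]
    nlinarith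
  constructor <;> linarith [abs_le.1 hx, h.mode_pos]

lemma drift_add_le {Y : ℝ} (hY : Y ≤ l * s) (hx : |x - q| ≤ Y * s) :
    n / x ^ 2 - l + (x - q) / s ^ 2 ≤ 3 * Y ^ 2 / s ^ 2 := by
  obtain ⟨hqx, hxq⟩ := h.half_mode_le_and_le_of_abs_le hY hx
  have hl := h.rate_pos
  have hs := h.width_pos
  have hq := h.mode_pos
  have hsq : (x - q) ^ 2 ≤ Y ^ 2 * s ^ 2 := by
    rw [← mul_pow, ← sq_abs (x - q)]
    gcongr
  have hxsq : (q / 2) ^ 2 ≤ x ^ 2 := by gcongr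
  rw [h.drift_add_eq (by linarith)]
  calc l * (x - q) ^ 2 * (q + 2 * x) / (q * x ^ 2)
      ≤ l * (Y ^ 2 * s ^ 2) * (q + 2 * (2 * q)) / (q * (q / 2) ^ 2) := by
        gcongr
        linarith
    _ = 5 * Y ^ 2 / (l * s ^ 2) := by
      rw [h.mode_eq]
      field_simp
      ring
    _ ≤ 3 * Y ^ 2 / s ^ 2 := by
      rw [div_le_div_iff₀ (by positivity) (by positivity)]
      nlinarith [h.two_le_rate, mul_nonneg (sq_nonneg Y) (sq_nonneg s)]

lemma one_div_two_mul_le (hqx : q / 2 ≤ x) : 1 / (2 * x) ≤ 1 / s ^ 2 := by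
  have hs := h.width_pos
  gcongr
  nlinarith [h.four_mul_width_sq_le_mode]

lemma div_sq_sub_one_le (hqx : q / 2 ≤ x) : n / (x ^ 2 - 1) ≤ n / x ^ 2 + 1 / s ^ 2 := by
  have hl := h.two_le_rate
  have hs := h.le_width
  have hq := h.mode_pos
  have hn := h.card_pos
  have hxsq : (q / 2) ^ 2 ≤ x ^ 2 := by gcongr
  have hone : 2 ≤ (q / 2) ^ 2 := by nlinarith [h.mul_width_le_mode]
  have hx1 : 0 < x ^ 2 - 1 := by linarith
  have hx : 0 < x := by linarith
  calc n / (x ^ 2 - 1) = n / x ^ 2 + n / (x ^ 2 * (x ^ 2 - 1)) := by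
        field_simp
        ring
    _ ≤ n / x ^ 2 + n / ((q / 2) ^ 2 * ((q / 2) ^ 2 / 2)) := by
        gcongr
        linarith
    _ = n / x ^ 2 + 8 / (l * s ^ 2) / s ^ 2 := by
        rw [h.card_eq, h.mode_eq]
        field_simp
        ring
    _ ≤ n / x ^ 2 + 1 / s ^ 2 := by
        gcongr
        rw [div_le_one (by positivity)]
        nlinarith

lemma div_two_mul_card_le (hxq : x ≤ 2 * q) : x / (2 * n) ≤ 1 / s ^ 2 := by
  have hl := h.two_le_rate
  have hs := h.width_pos
  have hn := h.card_pos
  calc x / (2 * n) ≤ 2 * q / (2 * n) := by gcongr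
    _ = 1 / (2 * l ^ 2) / s ^ 2 := by
      rw [h.card_eq, h.mode_eq]
      field_simp
    _ ≤ 1 / s ^ 2 := by
      gcongr
      rw [div_le_one (by positivity)]
      nlinarith

lemma drift_le_of_mode_add_width_le (hqx : q + s ≤ x) (hxq : x ≤ 2 * q) :
    n / x ^ 2 - l ≤ -(3 / (8 * s)) := by
  have hl := h.rate_pos
  have hs := h.width_pos
  have hq := h.mode_pos
  have hx : 0 < x := by linarith
  have hdrift : n / x ^ 2 - l = -(l * (x - q) * (x + q) / x ^ 2) := by
    rw [h.card_eq]
    field_simp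
    ring
  have hslope : 3 / (8 * s) = l * s * (3 / 4) / q := by
    rw [h.mode_eq]
    field_simp
    ring
  rw [hdrift, hslope, neg_le_neg_iff, div_le_div_iff₀ hq (by positivity)]
  have hquad : 3 / 4 * x ^ 2 ≤ (x + q) * q := by nlinarith
  calc l * s * (3 / 4) * x ^ 2 = l * s * (3 / 4 * x ^ 2) := by ring
    _ ≤ l * s * ((x + q) * q) := by gcongr
    _ ≤ l * (x - q) * ((x + q) * q) := by
      gcongr
      linarith
    _ = l * (x - q) * (x + q) * q := by ring

lemma upperDrift_le_of_mode_add_width_le (hqx : q + s ≤ x) (hxn : x ≤ n) :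
    n / (x ^ 2 - 1) - l + x / (2 * n) ≤ -(1 / (4 * s)) := by
  have hl := h.two_le_rate
  have hs := h.le_width
  have hq := h.mul_width_le_mode
  have hn := h.card_pos
  rcases le_total x (2 * q) with hxq | hxq
  · have hcorr := h.div_sq_sub_one_le (by linarith : q / 2 ≤ x)
    have hlin := h.div_two_mul_card_le hxq
    have hdrift := h.drift_le_of_mode_add_width_le hqx hxq
    have hsq : 1 / s ^ 2 ≤ 1 / (16 * s) := by
      gcongr
      nlinarith
    have hsum : 3 / (8 * s) = 1 / (4 * s) + 1 / (16 * s) + 1 / (16 * s) := by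
      field_simp
      norm_num
    linarith
  · have hcorr : n / (x ^ 2 - 1) ≤ l / 3 := by
      rw [div_le_div_iff₀ (by nlinarith) three_pos, h.card_eq]
      have hsq : 3 * q ^ 2 ≤ x ^ 2 - 1 := by nlinarith
      nlinarith
    have hlin : x / (2 * n) ≤ 1 / 2 := by
      rw [div_le_div_iff₀ (by positivity) two_pos]
      linarith
    have hwidth : 1 / (4 * s) ≤ 1 / 32 := by
      gcongr
      linarith
    linarith

lemma le_lowerDrift_of_le_mode_sub_width (hx : 0 < x) (hxq : x ≤ q - s) :
    1 / (4 * s) ≤ n / x ^ 2 - l - 1 / (2 * x) := by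
  have hl := h.two_le_rate
  have hs := h.le_width
  have hdrift : (2 * l * s - 1 / 2) / x + l * ((q - x) * (q + x) - 2 * s * x) / x ^ 2 =
      n / x ^ 2 - l - 1 / (2 * x) := by
    rw [h.card_eq]
    field_simp
    ring
  have hgap : 0 ≤ (q - x) * (q + x) - 2 * s * x := by nlinarith
  have hrest : 0 ≤ l * ((q - x) * (q + x) - 2 * s * x) / x ^ 2 := by positivity
  refine le_trans ?_ (hdrift ▸ le_add_of_nonneg_right hrest)
  rw [div_le_div_iff₀ (by positivity) hx]
  nlinarith [h.mode_eq]

end IsSaddle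

end Saddle

section Peak

lemma le_add_min_mul_sub_of_step_le {u : ℕ → ℝ} {a b t : ℝ} {N : ℕ} (hab : 0 ≤ a + b) (ht : 0 ≤ t)
    (hnear : ∀ j < N, (j : ℝ) < t → u (j + 1) - u j ≤ a)
    (hfar : ∀ j < N, t ≤ j → u (j + 1) - u j ≤ -b) :
    u N ≤ u 0 + (a + b) * min (N : ℝ) (t + 1) - b * N := by
  induction N with
  | zero => simp [ht.trans (lt_add_one t).le]
  | succ N ih =>
    have ih := ih (fun j hj => hnear j (by omega)) (fun j hj => hfar j (by omega))
    push_cast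
    rcases lt_or_ge (N : ℝ) t with hN | hN
    · rw [min_eq_left (by linarith)] at ih ⊢
      linarith [hnear N N.lt_succ_self hN]
    · have hmin : (a + b) * min (N : ℝ) (t + 1) ≤ (a + b) * min ((N : ℝ) + 1) (t + 1) := by
        gcongr
        linarith
      linarith [hfar N N.lt_succ_self hN]

lemma le_add_mul_sub_of_step_le {u : ℕ → ℝ} {a b t : ℝ} {N : ℕ} (hab : 0 ≤ a + b) (ht : 0 ≤ t)
    (hnear : ∀ j < N, (j : ℝ) < t → u (j + 1) - u j ≤ a)
    (hfar : ∀ j < N, t ≤ j → u (j + 1) - u j ≤ -b) :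
    u N ≤ u 0 + (a + b) * (t + 1) - b * N := by
  have hmin := mul_le_mul_of_nonneg_left (min_le_right (N : ℝ) (t + 1)) hab
  linarith [le_add_min_mul_sub_of_step_le hab ht hnear hfar]

lemma abs_sub_le_mul_of_step_le {u : ℕ → ℝ} {c : ℝ} {a b : ℕ}
    (hstep : ∀ j, min a b ≤ j → j < max a b → |u (j + 1) - u j| ≤ c) :
    |u a - u b| ≤ c * |(a : ℝ) - b| := by
  wlog hab : a ≤ b generalizing a b
  · rw [abs_sub_comm (u a), abs_sub_comm (a : ℝ)]
    exact this (by rwa [min_comm, max_comm]) (le_of_not_ge hab)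
  rw [min_eq_left hab, max_eq_right hab] at hstep
  have hdist := dist_le_Ico_sum_of_dist_le (f := u) hab (d := fun _ => c) fun {j} ha hb => by
    rw [dist_comm, Real.dist_eq]
    exact hstep j ha hb
  rwa [Finset.sum_const, Nat.card_Ico, nsmul_eq_mul, mul_comm, Nat.cast_sub hab,
    Real.dist_eq, ← abs_of_nonneg (sub_nonneg.2 (Nat.cast_le.2 hab : (a : ℝ) ≤ b)),
    abs_sub_comm (b : ℝ)] at hdist

lemma one_sub_inv_sq_nonneg (k : ℕ) : 0 ≤ 1 - 1 / (k : ℝ) ^ 2 := by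
  rw [one_div, sub_nonneg, ← Nat.cast_pow]
  exact Nat.cast_inv_le_one _

namespace IsSaddle

variable {n k : ℕ} {s q : ℝ} (h : IsSaddle n (logRate n) s q)
include h

lemma abs_log_coneCount_succ_sub_le {Y : ℝ} (hk : 1 ≤ k) (hkn : k + 1 ≤ n)
    (hY : Y ≤ logRate n * s) (hkq : |(k : ℝ) + 1 - q| ≤ Y * s) :
    |Real.log (coneCount n (k + 1)) - Real.log (coneCount n k) + ((k : ℝ) + 1 - q) / s ^ 2| ≤
      (3 * Y ^ 2 + 2) / s ^ 2 := by
  obtain ⟨hqk, hkq2⟩ := h.half_mode_le_and_le_of_abs_le hY hkq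
  have hdrift := h.drift_add_nonneg (by positivity : 0 < (k : ℝ) + 1)
  have hsq : 0 ≤ 3 * Y ^ 2 / s ^ 2 := by positivity
  have hone : 0 ≤ 1 / s ^ 2 := by positivity
  have hsum : (3 * Y ^ 2 + 2) / s ^ 2 = 3 * Y ^ 2 / s ^ 2 + 1 / s ^ 2 + 1 / s ^ 2 := by ring
  rw [abs_le, hsum]
  constructor
  · linarith [le_log_coneCount_succ_sub hk hkn, h.one_div_two_mul_le hqk]
  · linarith [log_coneCount_succ_sub_le hk hkn, h.drift_add_le hY hkq, h.div_sq_sub_one_le hqk,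
      h.div_two_mul_card_le hkq2]

lemma abs_log_coneCount_succ_sub_le_one_div (hk : 1 ≤ k) (hkn : k + 1 ≤ n)
    (hkq : |(k : ℝ) + 1 - q| ≤ s + 1) :
    |Real.log (coneCount n (k + 1)) - Real.log (coneCount n k) + ((k : ℝ) + 1 - q) / s ^ 2| ≤
      1 / s := by
  have hs := h.le_width
  refine (h.abs_log_coneCount_succ_sub_le (Y := 2) hk hkn ?_ (by linarith)).trans ?_
  · nlinarith [h.two_le_rate]
  · rw [div_le_div_iff₀ (by positivity) (by positivity)]
    nlinarith

lemma log_coneCount_succ_sub_le_neg (hk : 1 ≤ k) (hkn : k + 1 ≤ n) (hqk : q + s ≤ (k : ℝ) + 1) :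
    Real.log (coneCount n (k + 1)) - Real.log (coneCount n k) ≤ -(1 / (4 * s)) :=
  (log_coneCount_succ_sub_le hk hkn).trans
    (h.upperDrift_le_of_mode_add_width_le hqk (mod_cast hkn))

lemma le_log_coneCount_succ_sub_of_le (hk : 1 ≤ k) (hkn : k + 1 ≤ n) (hkq : (k : ℝ) + 1 ≤ q - s) :
    1 / (4 * s) ≤ Real.log (coneCount n (k + 1)) - Real.log (coneCount n k) :=
  (h.le_lowerDrift_of_le_mode_sub_width (by positivity) hkq).trans
    (le_log_coneCount_succ_sub hk hkn)

lemma floor_mode_le : (⌊q⌋₊ : ℝ) ≤ q := Nat.floor_le h.mode_pos.le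

lemma one_le_floor_mode : 1 ≤ ⌊q⌋₊ := by
  rw [Nat.one_le_floor_iff]
  linarith [h.mul_width_le_mode, h.le_width]

lemma floor_mode_le_card : ⌊q⌋₊ ≤ n := by
  have hle : (⌊q⌋₊ : ℝ) ≤ n := by linarith [h.floor_mode_le, h.two_mul_mode_le, h.mode_pos]
  exact_mod_cast hle

lemma excess_le_two : (1 / s + 1 / (4 * s)) * (s + 1) ≤ 2 := by
  have hs := h.le_width
  rw [show 1 / s + 1 / (4 * s) = 5 / (4 * s) by field_simp; norm_num, div_mul_eq_mul_div,
    div_le_iff₀ (by positivity)]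
  linarith

lemma log_coneCount_le_of_floor_mode_le (hqk : ⌊q⌋₊ ≤ k) (hkn : k ≤ n) :
    Real.log (coneCount n k) ≤
      Real.log (coneCount n ⌊q⌋₊) + 2 - 1 / (4 * s) * ((k : ℝ) - ⌊q⌋₊) := by
  obtain ⟨N, rfl⟩ := Nat.exists_eq_add_of_le hqk
  have hs := h.le_width
  have hfloor := h.floor_mode_le
  have hlt := Nat.lt_floor_add_one q
  have hq1 := h.one_le_floor_mode
  set u : ℕ → ℝ := fun j => Real.log (coneCount n (⌊q⌋₊ + j)) with hu
  have hnear : ∀ j < N, (j : ℝ) < s → u (j + 1) - u j ≤ 1 / s := fun j hj hjs => by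
    have hle := abs_le.1 (h.abs_log_coneCount_succ_sub_le_one_div (k := ⌊q⌋₊ + j) (by omega)
      (by omega) (by push_cast; rw [abs_le]; constructor <;> linarith))
    have hnonneg : 0 ≤ (((⌊q⌋₊ + j : ℕ) : ℝ) + 1 - q) / s ^ 2 := by
      refine div_nonneg ?_ (by positivity)
      push_cast
      linarith [j.cast_nonneg (α := ℝ)]
    exact (le_add_of_nonneg_right hnonneg).trans hle.2
  have hfar : ∀ j < N, s ≤ j → u (j + 1) - u j ≤ -(1 / (4 * s)) := fun j hj hjs =>
    h.log_coneCount_succ_sub_le_neg (k := ⌊q⌋₊ + j) (by omega) (by omega)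
      (by push_cast; linarith)
  have hle := le_add_mul_sub_of_step_le (by positivity) h.width_pos.le hnear hfar
  simp only [hu, add_zero] at hle
  push_cast
  linarith [h.excess_le_two]

lemma log_coneCount_le_of_le_floor_mode (hk : 1 ≤ k) (hkq : k ≤ ⌊q⌋₊) :
    Real.log (coneCount n k) ≤
      Real.log (coneCount n ⌊q⌋₊) + 2 - 1 / (4 * s) * ((⌊q⌋₊ : ℝ) - k) := by
  obtain ⟨N, hN⟩ := Nat.exists_eq_add_of_le hkq
  have hs := h.le_width
  have hfloor := h.floor_mode_le
  have hlt := Nat.lt_floor_add_one q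
  have hqn := h.floor_mode_le_card
  set u : ℕ → ℝ := fun j => Real.log (coneCount n (⌊q⌋₊ - j)) with hu
  have hpred : ∀ j < N, ∃ i, 1 ≤ i ∧ i + 1 ≤ n ∧ ⌊q⌋₊ - j = i + 1 ∧ ⌊q⌋₊ - (j + 1) = i ∧
      (i : ℝ) + 1 = ⌊q⌋₊ - j := fun j hj =>
    ⟨⌊q⌋₊ - (j + 1), by omega, by omega, by omega, rfl, by
      rw [Nat.cast_sub (by omega)]; push_cast; ring⟩
  have hnear : ∀ j < N, (j : ℝ) < s → u (j + 1) - u j ≤ 1 / s := fun j hj hjs => by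
    obtain ⟨i, hi1, hin, hj, hj1, hcast⟩ := hpred j hj
    have hle := abs_le.1 (h.abs_log_coneCount_succ_sub_le_one_div hi1 hin
      (by rw [abs_le]; constructor <;> linarith))
    have hnonpos : ((i : ℝ) + 1 - q) / s ^ 2 ≤ 0 :=
      div_nonpos_of_nonpos_of_nonneg (by linarith [j.cast_nonneg (α := ℝ)]) (by positivity)
    simp only [hu, hj, hj1]
    linarith
  have hfar : ∀ j < N, s ≤ j → u (j + 1) - u j ≤ -(1 / (4 * s)) := fun j hj hjs => by
    obtain ⟨i, hi1, hin, hj, hj1, hcast⟩ := hpred j hj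
    simp only [hu, hj, hj1]
    linarith [h.le_log_coneCount_succ_sub_of_le hi1 hin (by linarith)]
  have hle := le_add_mul_sub_of_step_le (by positivity) h.width_pos.le hnear hfar
  simp only [hu, tsub_zero] at hle
  rw [show ⌊q⌋₊ - N = k by omega] at hle
  rw [show (⌊q⌋₊ : ℝ) - k = N by rw [hN]; push_cast; ring]
  linarith [h.excess_le_two]

lemma abs_floor_mode_sub_le : |(⌊q⌋₊ : ℝ) - q| ≤ 1 := by
  rw [abs_le]
  constructor <;> linarith [h.floor_mode_le, Nat.lt_floor_add_one q]

theorem log_coneCount_sub_le (hk : 1 ≤ k) (hkn : k ≤ n) :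
    Real.log (coneCount n k) - Real.log (coneCount n ⌊q⌋₊) ≤ 3 - 1 / 4 * (|(k : ℝ) - q| / s) := by
  have hs := h.le_width
  have hwidth : 1 / (4 * s) ≤ 1 := by
    rw [div_le_one (by positivity)]
    linarith
  have hround : 1 / (4 * s) * |(k : ℝ) - q| ≤ 1 / (4 * s) * |(k : ℝ) - ⌊q⌋₊| + 1 := by
    have htri := (abs_sub_le (k : ℝ) ⌊q⌋₊ q).trans (add_le_add_right h.abs_floor_mode_sub_le _)
    nlinarith [mul_le_mul_of_nonneg_left htri (by positivity : 0 ≤ 1 / (4 * s))]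
  have hdecay : Real.log (coneCount n k) ≤
      Real.log (coneCount n ⌊q⌋₊) + 2 - 1 / (4 * s) * |(k : ℝ) - ⌊q⌋₊| := by
    rcases le_total ⌊q⌋₊ k with hqk | hkq
    · rw [abs_of_nonneg (sub_nonneg.2 (mod_cast hqk))]
      exact h.log_coneCount_le_of_floor_mode_le hqk hkn
    · rw [abs_sub_comm, abs_of_nonneg (sub_nonneg.2 (mod_cast hkq))]
      exact h.log_coneCount_le_of_le_floor_mode hk hkq
  have hscale : 1 / 4 * (|(k : ℝ) - q| / s) = 1 / (4 * s) * |(k : ℝ) - q| := by field_simp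
  linarith

lemma abs_succ_sub_mode_le {X : ℝ} {j : ℕ} (hkq : |(k : ℝ) - q| ≤ X * s)
    (hmin : min k ⌊q⌋₊ ≤ j) (hmax : j < max k ⌊q⌋₊) :
    |(j : ℝ) + 1 - q| ≤ (X + 1) * s := by
  have hs := h.le_width
  have hfloor := abs_le.1 h.abs_floor_mode_sub_le
  have hab := abs_le.1 hkq
  have hlow : q - (X + 1) * s ≤ j := by
    rcases min_le_iff.1 hmin with hle | hle <;> have := Nat.cast_le (α := ℝ).2 hle <;> linarith
  have hhigh : (j : ℝ) + 1 ≤ q + (X + 1) * s := by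
    rcases lt_max_iff.1 hmax with hlt | hlt <;>
      have := Nat.cast_le (α := ℝ).2 (Nat.succ_le_of_lt hlt) <;> push_cast at this <;> linarith
  rw [abs_le]
  constructor <;> linarith

lemma abs_log_coneCount_add_sq_succ_sub_le {Y : ℝ} (hk : 1 ≤ k) (hkn : k + 1 ≤ n)
    (hY : Y ≤ logRate n * s) (hkq : |(k : ℝ) + 1 - q| ≤ Y * s) :
    |Real.log (coneCount n (k + 1)) + (((k + 1 : ℕ) - q) / s) ^ 2 / 2 -
      (Real.log (coneCount n k) + ((k - q) / s) ^ 2 / 2)| ≤ 3 * (Y ^ 2 + 1) / s ^ 2 := by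
  have hs := h.width_pos
  have hle := abs_le.1 (h.abs_log_coneCount_succ_sub_le hk hkn hY hkq)
  have hid : Real.log (coneCount n (k + 1)) + (((k + 1 : ℕ) - q) / s) ^ 2 / 2 -
      (Real.log (coneCount n k) + ((k - q) / s) ^ 2 / 2) =
        Real.log (coneCount n (k + 1)) - Real.log (coneCount n k) + ((k : ℝ) + 1 - q) / s ^ 2 -
          1 / (2 * s ^ 2) := by
    push_cast
    field_simp
    ring
  have hhalf : 1 / (2 * s ^ 2) ≤ 1 / s ^ 2 := by
    gcongr
    linarith [sq_nonneg s]
  have hnonneg : 0 ≤ 1 / (2 * s ^ 2) := by positivity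
  have hadd : 3 * (Y ^ 2 + 1) / s ^ 2 = (3 * Y ^ 2 + 2) / s ^ 2 + 1 / s ^ 2 := by ring
  rw [hid, abs_le, hadd]
  constructor <;> linarith

lemma mode_mul_exp_neg_logRate : q * Real.exp (-logRate n) = √(Real.pi / logRate n) := by
  have hn := h.card_pos
  have hl := h.rate_pos
  have hq := h.mode_pos
  have hexp : Real.exp (2 * logRate n) = n / Real.pi := by
    rw [logRate, ← mul_assoc, mul_one_div_cancel two_ne_zero, one_mul,
      Real.exp_log (by positivity)]
  have hexp_neg : Real.exp (-logRate n) ^ 2 = Real.pi / n := by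
    rw [← Real.exp_nat_mul, Nat.cast_ofNat, mul_neg, Real.exp_neg, hexp, inv_div]
  rw [eq_comm, Real.sqrt_eq_iff_mul_self_eq (by positivity) (by positivity), ← sq, mul_pow,
    hexp_neg, h.card_eq]
  field_simp

section Central

variable {X : ℝ} (hXs : X + 1 ≤ s) (hkq : |(k : ℝ) - q| ≤ X * s)
include hXs hkq

lemma two_le_and_succ_le_two_mul_mode : 2 ≤ k ∧ (k : ℝ) + 1 ≤ 2 * q := by
  have hs := h.le_width
  have hq := h.four_mul_width_sq_le_mode
  have hXsq : X * s ≤ s ^ 2 := by nlinarith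
  have hkq := abs_le.1 hkq
  have htwo : (2 : ℝ) ≤ k := by nlinarith
  exact ⟨mod_cast htwo, by nlinarith⟩

lemma le_card_of_abs_sub_mode_le : k ≤ n := by
  have hle : (k : ℝ) ≤ n := by
    linarith [(h.two_le_and_succ_le_two_mul_mode hXs hkq).2, h.two_mul_mode_le]
  exact_mod_cast hle

theorem abs_log_coneCount_sub_add_sq_le (hX : 0 ≤ X) :
    |Real.log (coneCount n k) - Real.log (coneCount n ⌊q⌋₊) + (((k : ℝ) - q) / s) ^ 2 / 2| ≤
      4 * ((X + 1) * ((X + 1) ^ 2 + 1)) / s := by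
  have hs := h.le_width
  have hk2 := (h.two_le_and_succ_le_two_mul_mode hXs hkq).1
  have hkn := h.le_card_of_abs_sub_mode_le hXs hkq
  have hq1 := h.one_le_floor_mode
  have hqn := h.floor_mode_le_card
  have hfloor := h.abs_floor_mode_sub_le
  have hdist : |(k : ℝ) - ⌊q⌋₊| ≤ (X + 1) * s := by
    rw [abs_sub_comm] at hfloor
    linarith [abs_sub_le (k : ℝ) q ⌊q⌋₊]
  have hsum : |Real.log (coneCount n k) + ((k - q) / s) ^ 2 / 2 -
      (Real.log (coneCount n ⌊q⌋₊) + ((⌊q⌋₊ - q) / s) ^ 2 / 2)| ≤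
        3 * ((X + 1) * ((X + 1) ^ 2 + 1)) / s := by
    calc _ ≤ 3 * ((X + 1) ^ 2 + 1) / s ^ 2 * |(k : ℝ) - ⌊q⌋₊| :=
          abs_sub_le_mul_of_step_le (u := fun j => Real.log (coneCount n j) + ((j - q) / s) ^ 2 / 2)
            fun j hmin hmax => h.abs_log_coneCount_add_sq_succ_sub_le (by omega) (by omega)
              (by nlinarith [h.two_le_rate]) (h.abs_succ_sub_mode_le hkq hmin hmax)
      _ ≤ 3 * ((X + 1) ^ 2 + 1) / s ^ 2 * ((X + 1) * s) := by gcongr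
      _ = 3 * ((X + 1) * ((X + 1) ^ 2 + 1)) / s := by field_simp
  have hround : ((⌊q⌋₊ - q) / s) ^ 2 / 2 ≤ (X + 1) * ((X + 1) ^ 2 + 1) / s := by
    have hsq := (sq_le_one_iff_abs_le_one _).2 hfloor
    calc ((⌊q⌋₊ - q) / s) ^ 2 / 2 = (⌊q⌋₊ - q) ^ 2 / (2 * s) / s := by field_simp
      _ ≤ (X + 1) * ((X + 1) ^ 2 + 1) / s := by
        gcongr
        rw [div_le_iff₀ (by positivity)]
        nlinarith [mul_nonneg hX (sq_nonneg X)]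
  have hround0 : 0 ≤ ((⌊q⌋₊ - q) / s) ^ 2 / 2 := by positivity
  have hadd : 4 * ((X + 1) * ((X + 1) ^ 2 + 1)) / s = 3 * ((X + 1) * ((X + 1) ^ 2 + 1)) / s +
      (X + 1) * ((X + 1) ^ 2 + 1) / s := by ring
  have hsum := abs_le.1 hsum
  rw [abs_le, hadd]
  constructor <;> linarith

lemma one_sub_inv_sq_rpow_le : (1 - 1 / (k : ℝ) ^ 2) ^ ((n : ℝ) - k / 2) ≤
    Real.exp (1 - logRate n) := by
  have hs := h.le_width
  have hl := h.two_le_rate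
  have hk2 : (2 : ℝ) ≤ k := mod_cast (h.two_le_and_succ_le_two_mul_mode hXs hkq).1
  have hkn : (k : ℝ) ≤ n := mod_cast h.le_card_of_abs_sub_mode_le hXs hkq
  have hdrift := h.drift_add_nonneg (by positivity : 0 < (k : ℝ))
  have hround := h.one_div_two_mul_le
    (h.half_mode_le_and_le_of_abs_le (Y := X) (by nlinarith) hkq).1
  have hone : ((k : ℝ) - q) / s ^ 2 + 1 / s ^ 2 ≤ 1 := by
    rw [← add_div, div_le_one (by positivity)]
    nlinarith [abs_le.1 hkq]
  have hbase : 1 - 1 / (k : ℝ) ^ 2 ≤ Real.exp (-(1 / (k : ℝ) ^ 2)) := by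
    linarith [Real.add_one_le_exp (-(1 / (k : ℝ) ^ 2))]
  have hbase0 := one_sub_inv_sq_nonneg k
  calc _ ≤ Real.exp (-(1 / (k : ℝ) ^ 2)) ^ ((n : ℝ) - k / 2) := by
        gcongr
        linarith
    _ = Real.exp (-(n / (k : ℝ) ^ 2 - 1 / (2 * k))) := by
        rw [← Real.exp_mul]
        congr 1
        field_simp
    _ ≤ Real.exp (1 - logRate n) := by
        rw [Real.exp_le_exp]
        linarith

theorem one_sub_le_R_div_coneCount :
    1 - 2 * Real.exp 1 * √(Real.pi / logRate n) ≤ R n k / coneCount n k := by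
  obtain ⟨hk2, hkq2⟩ := h.two_le_and_succ_le_two_mul_mode hXs hkq
  have hkn := h.le_card_of_abs_sub_mode_le hXs hkq
  have hpos := coneCount_pos (by omega) hkn
  have herr : ((k : ℝ) + 1) * (1 - 1 / (k : ℝ) ^ 2) ^ ((n : ℝ) - k / 2) ≤
      2 * Real.exp 1 * √(Real.pi / logRate n) :=
    calc _ ≤ 2 * q * Real.exp (1 - logRate n) := by
          have hq := h.mode_pos
          gcongr
          · exact Real.rpow_nonneg (one_sub_inv_sq_nonneg k) _
          · exact h.one_sub_inv_sq_rpow_le hXs hkq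
      _ = 2 * Real.exp 1 * √(Real.pi / logRate n) := by
          rw [← h.mode_mul_exp_neg_logRate, sub_eq_add_neg, Real.exp_add]
          ring
  rw [le_div_iff₀ hpos, mul_comm]
  refine le_trans ?_ (coneCount_mul_le_R hk2 hkn)
  gcongr

end Central

end IsSaddle

end Peak

section RiemannSum

open Filter MeasureTheory Set Topology

lemma integrable_exp_neg_mul_abs {c : ℝ} (hc : 0 < c) :
    Integrable fun x : ℝ => Real.exp (-(c * |x|)) := by
  refine .of_integral_ne_zero ?_
  rw [integral_comp_abs (f := fun x => Real.exp (-(c * x)))]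
  simp only [← neg_mul]
  rw [integral_exp_mul_Ioi (neg_lt_zero.2 hc)]
  simp [hc.ne']

lemma pow_mul_exp_neg_mul_le {c t : ℝ} (hc : 0 < c) (ht : 0 ≤ t) (j : ℕ) :
    t ^ j * Real.exp (-(c * t)) ≤ j.factorial * (2 / c) ^ j * Real.exp (-(c / 2 * t)) := by
  have hpow : t ^ j ≤ j.factorial * (2 / c) ^ j * Real.exp (c / 2 * t) := by
    have hle := Real.pow_div_factorial_le_exp (c / 2 * t) (by positivity) j
    rw [div_le_iff₀' (by positivity)] at hle
    calc t ^ j = (2 / c) ^ j * (c / 2 * t) ^ j := by rw [← mul_pow]; congr 1; field_simp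
      _ ≤ (2 / c) ^ j * (j.factorial * Real.exp (c / 2 * t)) := by gcongr
      _ = j.factorial * (2 / c) ^ j * Real.exp (c / 2 * t) := by ring
  calc t ^ j * Real.exp (-(c * t))
      ≤ j.factorial * (2 / c) ^ j * Real.exp (c / 2 * t) * Real.exp (-(c * t)) := by gcongr
    _ = j.factorial * (2 / c) ^ j * Real.exp (-(c / 2 * t)) := by
      rw [mul_assoc, ← Real.exp_add]
      congr 2
      ring

section Floor

variable {q s : ℝ} (hs : 0 < s)
include hs

lemma floor_add_mul_eq_iff {x : ℝ} {k : ℕ} (hk : k ≠ 0) :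
    ⌊q + s * x⌋₊ = k ↔ x ∈ Ico ((k - q) / s) ((k + 1 - q) / s) := by
  rw [Nat.floor_eq_iff' hk, mem_Ico, div_le_iff₀ hs, lt_div_iff₀ hs, sub_le_iff_le_add',
    lt_sub_iff_add_lt', mul_comm]

lemma abs_floor_sub_div_sub_le {x : ℝ} (hx : 0 ≤ q + s * x) :
    |(⌊q + s * x⌋₊ - q) / s - x| ≤ 1 / s := by
  have hfloor : |(⌊q + s * x⌋₊ : ℝ) - (q + s * x)| ≤ 1 := by
    rw [abs_le]
    constructor <;> linarith [Nat.floor_le hx, Nat.lt_floor_add_one (q + s * x)]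
  calc |(⌊q + s * x⌋₊ - q) / s - x| = |(⌊q + s * x⌋₊ : ℝ) - (q + s * x)| / s := by
        rw [← abs_of_pos hs, ← abs_div, abs_of_pos hs]
        congr 1
        field_simp
        ring
    _ ≤ 1 / s := by gcongr

lemma integral_indicator_floor {I : Finset ℕ} (hI : 0 ∉ I) (w : ℕ → ℝ) :
    ∫ x, (I : Set ℕ).indicator w ⌊q + s * x⌋₊ = ∑ k ∈ I, w k / s := by
  have hsum (x : ℝ) : (I : Set ℕ).indicator w ⌊q + s * x⌋₊ =
      ∑ k ∈ I, (Ico ((k - q) / s) ((k + 1 - q) / s)).indicator (fun _ => w k) x := by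
    have hite : (I : Set ℕ).indicator w ⌊q + s * x⌋₊ =
        if ⌊q + s * x⌋₊ ∈ I then w ⌊q + s * x⌋₊ else 0 := indicator_apply ..
    rw [hite, ← Finset.sum_ite_eq]
    refine Finset.sum_congr rfl fun k hk => ?_
    rw [indicator_apply]
    exact if_congr (floor_add_mul_eq_iff hs (ne_of_mem_of_not_mem hk hI)) rfl rfl
  simp only [hsum]
  rw [integral_finsetSum _ fun k _ => (integrable_indicator_iff measurableSet_Ico).2
    (integrableOn_const measure_Ico_lt_top.ne)]
  refine Finset.sum_congr rfl fun k _ => ?_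
  have hlen : (k + 1 - q) / s - (k - q) / s = 1 / s := by ring
  rw [integral_indicator_const _ measurableSet_Ico, Real.volume_real_Ico, hlen,
    max_eq_left (by positivity), smul_eq_mul, one_div_mul_eq_div]

omit hs in
lemma abs_indicator_floor_le {I : Finset ℕ} (hI : 0 ∉ I) {w : ℕ → ℝ} {C c : ℝ} (hC : 0 ≤ C)
    (hc : 0 ≤ c) (hs1 : 1 ≤ s) (hw : ∀ k ∈ I, |w k| ≤ C * Real.exp (-(c * (|k - q| / s)))) (x : ℝ) :
    |(I : Set ℕ).indicator w ⌊q + s * x⌋₊| ≤ C * Real.exp c * Real.exp (-(c * |x|)) := by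
  have hs : 0 < s := zero_lt_one.trans_le hs1
  rw [indicator_apply]
  split_ifs with hk
  · have hx : 0 ≤ q + s * x := by
      by_contra! hneg
      rw [Nat.floor_of_nonpos hneg.le] at hk
      exact hI hk
    have hclose := (abs_floor_sub_div_sub_le hs hx).trans ((div_le_one hs).2 hs1)
    have hdist : |x| - 1 ≤ |(⌊q + s * x⌋₊ : ℝ) - q| / s := by
      rw [← abs_of_pos hs, ← abs_div, abs_of_pos hs]
      rw [abs_sub_comm] at hclose
      linarith [abs_sub_abs_le_abs_sub x ((⌊q + s * x⌋₊ - q) / s)]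
    calc _ ≤ C * Real.exp (-(c * (|⌊q + s * x⌋₊ - q| / s))) := hw _ hk
      _ ≤ C * Real.exp (-(c * (|x| - 1))) := by gcongr
      _ = C * Real.exp c * Real.exp (-(c * |x|)) := by
        rw [mul_assoc, ← Real.exp_add]
        congr 2
        ring
  · rw [abs_zero]
    positivity

end Floor

section Limit

variable {ι : Type*} {l : Filter ι} {I : ι → Finset ℕ} {q s : ι → ℝ} {w : ι → ℕ → ℝ} {g : ℝ → ℝ}
  {C c : ℝ}

lemma eventually_add_mul_nonneg (hs : Tendsto s l atTop)
    (hqs : Tendsto (fun i => q i / s i) l atTop) (x : ℝ) : ∀ᶠ i in l, 0 ≤ q i + s i * x := by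
  filter_upwards [hs.eventually_gt_atTop 0, hqs.eventually_ge_atTop (-x)] with i hs0 hx
  rw [le_div_iff₀ hs0] at hx
  linarith

lemma tendsto_floor_sub_div (hs : Tendsto s l atTop) (hqs : Tendsto (fun i => q i / s i) l atTop)
    (x : ℝ) : Tendsto (fun i => (⌊q i + s i * x⌋₊ - q i) / s i) l (𝓝 x) := by
  rw [tendsto_iff_norm_sub_tendsto_zero]
  have hinv : Tendsto (fun i => 1 / s i) l (𝓝 0) := tendsto_const_nhds.div_atTop hs
  refine squeeze_zero' (.of_forall fun _ => norm_nonneg _) ?_ hinv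
  filter_upwards [hs.eventually_gt_atTop 0, eventually_add_mul_nonneg hs hqs x] with i hs0 hx
  exact abs_floor_sub_div_sub_le hs0 hx

variable [l.IsCountablyGenerated]

theorem tendsto_sum_div_integral (hc : 0 < c) (hC : 0 ≤ C) (hI : ∀ i, 0 ∉ I i)
    (hs : Tendsto s l atTop)
    (hw : ∀ᶠ i in l, ∀ k ∈ I i, |w i k| ≤ C * Real.exp (-(c * (|k - q i| / s i))))
    (hlim : ∀ x, Tendsto (fun i => (I i : Set ℕ).indicator (w i) ⌊q i + s i * x⌋₊) l (𝓝 (g x))) :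
    Tendsto (fun i => ∑ k ∈ I i, w i k / s i) l (𝓝 (∫ x, g x)) := by
  have hint : Tendsto (fun i => ∫ x, (I i : Set ℕ).indicator (w i) ⌊q i + s i * x⌋₊) l
      (𝓝 (∫ x, g x)) := by
    refine tendsto_integral_filter_of_dominated_convergence
      (fun x => C * Real.exp c * Real.exp (-(c * |x|))) (.of_forall fun i => ?_) ?_
      ((integrable_exp_neg_mul_abs hc).const_mul _) (.of_forall hlim)
    · have hfloor : Measurable fun x : ℝ => ⌊q i + s i * x⌋₊ := by fun_prop
      have hstep : Measurable ((I i : Set ℕ).indicator (w i)) := measurable_from_nat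
      exact (hstep.comp hfloor).aestronglyMeasurable
    · filter_upwards [hs.eventually_ge_atTop 1, hw] with i hs1 hwi
      exact .of_forall (abs_indicator_floor_le (hI i) hC hc.le hs1 hwi)
  refine hint.congr' ?_
  filter_upwards [hs.eventually_gt_atTop 0] with i hs0
  exact integral_indicator_floor hs0 (hI i) (w i)

theorem tendsto_sum_pow_mul_div_integral (hc : 0 < c) (hC : 0 ≤ C) (hI : ∀ i, 0 ∉ I i)
    (hs : Tendsto s l atTop) (hqs : Tendsto (fun i => q i / s i) l atTop)
    (hw : ∀ᶠ i in l, ∀ k ∈ I i, |w i k| ≤ C * Real.exp (-(c * (|k - q i| / s i))))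
    (hlim : ∀ x, Tendsto (fun i => (I i : Set ℕ).indicator (w i) ⌊q i + s i * x⌋₊) l (𝓝 (g x)))
    (j : ℕ) :
    Tendsto (fun i => ∑ k ∈ I i, ((k - q i) / s i) ^ j * w i k / s i) l
      (𝓝 (∫ x, x ^ j * g x)) := by
  refine tendsto_sum_div_integral (q := q) (c := c / 2) (C := C * (j.factorial * (2 / c) ^ j))
    (by positivity) (by positivity) hI hs ?_ fun x => ?_
  · filter_upwards [hs.eventually_gt_atTop 0, hw] with i hs0 hwi k hk
    set t := |k - q i| / s i
    have ht0 : 0 ≤ t := by positivity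
    calc |((k - q i) / s i) ^ j * w i k| = t ^ j * |w i k| := by
          rw [abs_mul, abs_pow, abs_div, abs_of_pos hs0]
      _ ≤ t ^ j * (C * Real.exp (-(c * t))) := by gcongr; exact hwi k hk
      _ = C * (t ^ j * Real.exp (-(c * t))) := by ring
      _ ≤ C * (j.factorial * (2 / c) ^ j * Real.exp (-(c / 2 * t))) := by
        gcongr C * ?_
        exact pow_mul_exp_neg_mul_le hc ht0 j
      _ = C * (j.factorial * (2 / c) ^ j) * Real.exp (-(c / 2 * t)) := by ring
  · refine (((tendsto_floor_sub_div hs hqs x).pow j).mul (hlim x)).congr fun i =>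
      (indicator_mul_right _ (fun k : ℕ => ((k - q i) / s i) ^ j) (w i)).symm

end Limit

lemma integral_pow_mul_exp_neg_sq_div_two (j : ℕ) :
    ∫ x : ℝ, x ^ j * Real.exp (-(x ^ 2 / 2)) =
      √(2 * Real.pi) * ∫ x, x ^ j ∂ProbabilityTheory.gaussianReal 0 1 := by
  rw [ProbabilityTheory.integral_gaussianReal_eq_integral_smul one_ne_zero, ← integral_const_mul]
  congr 1 with x
  rw [ProbabilityTheory.gaussianPDFReal_def, smul_eq_mul]
  simp only [NNReal.coe_one, mul_one, sub_zero]
  field_simp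

lemma integral_sq_gaussianReal_zero (v : NNReal) :
    ∫ x, x ^ 2 ∂ProbabilityTheory.gaussianReal 0 v = v := by
  rw [← ProbabilityTheory.variance_fun_id_gaussianReal (μ := 0) (v := v),
    ProbabilityTheory.variance_eq_integral measurable_id'.aemeasurable]
  simp

end RiemannSum

section Variance

open Filter MeasureTheory Set Topology

/-- The scale on which the numbers `R n k` vary with `k`: the standard deviation of `k`, up to a
factor tending to `1`. It solves the equations of `IsSaddle` for the rate `logRate n`. -/
noncomputable def width (n : ℕ) : ℝ := √√(n / (4 * logRate n ^ 3))

/-- The approximate location of the peak of `k ↦ R n k`, which `IsSaddle` ties to `width n`. -/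
noncomputable def mode (n : ℕ) : ℝ := 2 * logRate n * width n ^ 2

lemma width_sq (n : ℕ) : width n ^ 2 = √(n / (4 * logRate n ^ 3)) :=
  Real.sq_sqrt (Real.sqrt_nonneg _)

lemma tendsto_natCast_div_pi : Tendsto (fun n : ℕ => (n : ℝ) / Real.pi) atTop atTop :=
  tendsto_natCast_atTop_atTop.atTop_div_const Real.pi_pos

lemma tendsto_logRate : Tendsto logRate atTop atTop :=
  (Real.tendsto_log_atTop.comp tendsto_natCast_div_pi).const_mul_atTop one_half_pos

lemma tendsto_width : Tendsto width atTop atTop := by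
  refine Real.tendsto_sqrt_atTop.comp (Real.tendsto_sqrt_atTop.comp ?_)
  have hzero : Tendsto (fun y : ℝ => Real.log y ^ 3 / y) atTop (𝓝 0) :=
    (Real.isLittleO_pow_log_id_atTop (n := 3)).tendsto_div_nhds_zero
  have hpos : ∀ᶠ y : ℝ in atTop, Real.log y ^ 3 / y ∈ Ioi 0 := by
    filter_upwards [eventually_gt_atTop 1] with y hy
    exact div_pos (pow_pos (Real.log_pos hy) 3) (by linarith)
  have hinf := (tendsto_inv_nhdsGT_zero.comp
    (tendsto_nhdsWithin_iff.2 ⟨hzero, hpos⟩)).const_mul_atTop Real.two_pi_pos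
  refine (hinf.comp tendsto_natCast_div_pi).congr fun n => ?_
  simp only [Function.comp, logRate, inv_div]
  field_simp
  ring

lemma eventually_isSaddle : ∀ᶠ n : ℕ in atTop, IsSaddle n (logRate n) (width n) (mode n) := by
  filter_upwards [tendsto_logRate.eventually_ge_atTop 2, tendsto_width.eventually_ge_atTop 100]
    with n hl hs
  refine ⟨hl, hs, rfl, ?_⟩
  have hfour : width n ^ 4 = n / (4 * logRate n ^ 3) := by
    rw [pow_mul (width n) 2 2, width_sq, Real.sq_sqrt (by positivity)]
  calc (n : ℝ) = 4 * logRate n ^ 3 * width n ^ 4 := by rw [hfour]; field_simp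
    _ = logRate n * mode n ^ 2 := by rw [mode]; ring

lemma tendsto_mode_div_width : Tendsto (fun n => mode n / width n) atTop atTop := by
  refine ((tendsto_logRate.const_mul_atTop two_pos).atTop_mul_atTop₀ tendsto_width).congr' ?_
  filter_upwards [tendsto_width.eventually_ne_atTop 0] with n hs
  rw [mode]
  field_simp

lemma tendsto_width_sq_mul_sqrt :
    Tendsto (fun n : ℕ => width n ^ 2 * √(Real.log n ^ 3 / (2 * n))) atTop (𝓝 1) := by
  have hlog : Tendsto (fun n : ℕ => Real.log n / (2 * logRate n)) atTop (𝓝 1) := by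
    have hone : Tendsto (fun n => 1 + Real.log Real.pi / (2 * logRate n)) atTop (𝓝 (1 + 0)) :=
      tendsto_const_nhds.add
        (tendsto_const_nhds.div_atTop (tendsto_logRate.const_mul_atTop two_pos))
    rw [add_zero] at hone
    refine hone.congr' ?_
    filter_upwards [eventually_isSaddle] with n h
    have hl := h.rate_pos
    rw [one_add_div (by positivity), logRate, Real.log_div h.card_pos.ne' Real.pi_ne_zero]
    ring
  have hsqrt := (Real.continuous_sqrt.tendsto _).comp (hlog.pow 3)
  rw [one_pow, Real.sqrt_one] at hsqrt
  refine hsqrt.congr' ?_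
  filter_upwards [eventually_isSaddle] with n h
  have hl := h.rate_pos
  have hn := h.card_pos
  rw [width_sq, ← Real.sqrt_mul (by positivity), Function.comp]
  congr 1
  field_simp
  norm_num

lemma coneCount_div_coneCount {n k m : ℕ} (hk : 1 ≤ k) (hkn : k ≤ n) (hm : 1 ≤ m) (hmn : m ≤ n) :
    coneCount n k / coneCount n m =
      Real.exp (Real.log (coneCount n k) - Real.log (coneCount n m)) := by
  rw [Real.exp_sub, Real.exp_log (coneCount_pos hk hkn), Real.exp_log (coneCount_pos hm hmn)]

lemma eventually_abs_R_div_coneCount_le :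
    ∀ᶠ n in atTop, ∀ k ∈ Finset.Icc 1 n, |R n k / coneCount n ⌊mode n⌋₊| ≤
      Real.exp 3 * Real.exp (-(1 / 4 * (|k - mode n| / width n))) := by
  filter_upwards [eventually_isSaddle] with n h k hk
  obtain ⟨hk1, hkn⟩ := Finset.mem_Icc.1 hk
  have hpos := coneCount_pos h.one_le_floor_mode h.floor_mode_le_card
  rw [abs_of_nonneg (by positivity)]
  calc R n k / coneCount n ⌊mode n⌋₊ ≤ coneCount n k / coneCount n ⌊mode n⌋₊ := by
        gcongr
        exact R_le_coneCount hk1 hkn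
    _ = Real.exp (Real.log (coneCount n k) - Real.log (coneCount n ⌊mode n⌋₊)) :=
      coneCount_div_coneCount hk1 hkn h.one_le_floor_mode h.floor_mode_le_card
    _ ≤ Real.exp (3 + -(1 / 4 * (|k - mode n| / width n))) :=
      Real.exp_le_exp.2 (h.log_coneCount_sub_le hk1 hkn)
    _ = _ := Real.exp_add ..

section PointwiseLimit

variable (x : ℝ)

lemma eventually_abs_floor_sub_mode_le :
    ∀ᶠ n in atTop, |⌊mode n + width n * x⌋₊ - mode n| ≤ (|x| + 1) * width n := by
  have hlim := (tendsto_floor_sub_div tendsto_width tendsto_mode_div_width x).abs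
  filter_upwards [tendsto_width.eventually_gt_atTop 0,
    hlim.eventually_le_const (lt_add_one |x|)] with n hs hle
  rwa [abs_div, abs_of_pos hs, div_le_iff₀ hs] at hle

lemma tendsto_log_coneCount_floor_sub :
    Tendsto (fun n => Real.log (coneCount n ⌊mode n + width n * x⌋₊) -
      Real.log (coneCount n ⌊mode n⌋₊)) atTop (𝓝 (-(x ^ 2 / 2))) := by
  have herr : Tendsto (fun n => Real.log (coneCount n ⌊mode n + width n * x⌋₊) -
      Real.log (coneCount n ⌊mode n⌋₊) +
        ((⌊mode n + width n * x⌋₊ - mode n) / width n) ^ 2 / 2) atTop (𝓝 0) := by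
    rw [tendsto_zero_iff_norm_tendsto_zero]
    refine squeeze_zero' (.of_forall fun _ => norm_nonneg _) ?_
      ((tendsto_const_nhds (x := 4 * ((|x| + 1 + 1) * ((|x| + 1 + 1) ^ 2 + 1)))).div_atTop
        tendsto_width)
    filter_upwards [eventually_isSaddle, eventually_abs_floor_sub_mode_le x,
      tendsto_width.eventually_ge_atTop (|x| + 1 + 1)] with n h hk hs
    exact h.abs_log_coneCount_sub_add_sq_le hs hk (by positivity)
  have hsq := ((tendsto_floor_sub_div tendsto_width tendsto_mode_div_width x).pow 2).div_const 2
  simpa using herr.sub hsq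

lemma tendsto_R_div_coneCount_floor :
    Tendsto (fun n => R n ⌊mode n + width n * x⌋₊ / coneCount n ⌊mode n + width n * x⌋₊) atTop
      (𝓝 1) := by
  have hlow : Tendsto (fun n => 1 - 2 * Real.exp 1 * √(Real.pi / logRate n)) atTop (𝓝 1) := by
    have hsqrt := (Real.continuous_sqrt.tendsto _).comp
      ((tendsto_const_nhds (x := Real.pi)).div_atTop tendsto_logRate)
    simpa using (hsqrt.const_mul (2 * Real.exp 1)).const_sub 1
  have hnear := eventually_isSaddle.and ((eventually_abs_floor_sub_mode_le x).and
    (tendsto_width.eventually_ge_atTop (|x| + 1 + 1)))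
  refine tendsto_of_tendsto_of_tendsto_of_le_of_le' hlow tendsto_const_nhds ?_ ?_
  · filter_upwards [hnear] with n ⟨h, hk, hs⟩
    exact h.one_sub_le_R_div_coneCount hs hk
  · filter_upwards [hnear] with n ⟨h, hk, hs⟩
    have hk1 := one_le_two.trans (h.two_le_and_succ_le_two_mul_mode hs hk).1
    have hkn := h.le_card_of_abs_sub_mode_le hs hk
    exact (div_le_one (coneCount_pos hk1 hkn)).2 (R_le_coneCount hk1 hkn)

lemma tendsto_indicator_R_div_coneCount_floor :
    Tendsto (fun n => (Finset.Icc 1 n : Set ℕ).indicator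
      (fun k => R n k / coneCount n ⌊mode n⌋₊) ⌊mode n + width n * x⌋₊) atTop
      (𝓝 (Real.exp (-(x ^ 2 / 2)))) := by
  have hprod := (tendsto_R_div_coneCount_floor x).mul
    ((Real.continuous_exp.tendsto _).comp (tendsto_log_coneCount_floor_sub x))
  rw [one_mul] at hprod
  refine hprod.congr' ?_
  filter_upwards [eventually_isSaddle, eventually_abs_floor_sub_mode_le x,
    tendsto_width.eventually_ge_atTop (|x| + 1 + 1)] with n h hk hs
  have hk1 := one_le_two.trans (h.two_le_and_succ_le_two_mul_mode hs hk).1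
  have hkn := h.le_card_of_abs_sub_mode_le hs hk
  rw [indicator_of_mem (Finset.mem_coe.2 (Finset.mem_Icc.2 ⟨hk1, hkn⟩)), Function.comp,
    ← coneCount_div_coneCount hk1 hkn h.one_le_floor_mode h.floor_mode_le_card,
    div_mul_div_cancel₀ (coneCount_pos hk1 hkn).ne']

end PointwiseLimit

theorem tendsto_sum_pow_mul_R_div (j : ℕ) :
    Tendsto (fun n => (∑ k ∈ Finset.Icc 1 n, ((k - mode n) / width n) ^ j * R n k) /
      (coneCount n ⌊mode n⌋₊ * width n)) atTop
      (𝓝 (√(2 * Real.pi) * ∫ x, x ^ j ∂ProbabilityTheory.gaussianReal 0 1)) := by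
  rw [← integral_pow_mul_exp_neg_sq_div_two]
  refine (tendsto_sum_pow_mul_div_integral (by norm_num) (Real.exp_pos 3).le (by simp)
    tendsto_width tendsto_mode_div_width eventually_abs_R_div_coneCount_le
    tendsto_indicator_R_div_coneCount_floor j).congr fun n => ?_
  rw [Finset.sum_div]
  exact Finset.sum_congr rfl fun k _ => by rw [← mul_div_assoc, div_div]

theorem tendsto_sum_pow_mul_R_div_sum_R (j : ℕ) :
    Tendsto (fun n => (∑ k ∈ Finset.Icc 1 n, ((k - mode n) / width n) ^ j * R n k) /
      ∑ k ∈ Finset.Icc 1 n, (R n k : ℝ)) atTop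
      (𝓝 (∫ x, x ^ j ∂ProbabilityTheory.gaussianReal 0 1)) := by
  have hzero := tendsto_sum_pow_mul_R_div 0
  simp only [pow_zero, one_mul, integral_const, probReal_univ, one_smul, mul_one] at hzero
  have hpi : √(2 * Real.pi) ≠ 0 := by positivity
  have hratio := (tendsto_sum_pow_mul_R_div j).div hzero hpi
  rw [mul_div_cancel_left₀ _ hpi] at hratio
  refine hratio.congr' ?_
  filter_upwards [eventually_isSaddle] with n h
  have hpos := coneCount_pos h.one_le_floor_mode h.floor_mode_le_card
  exact div_div_div_cancel_right₀ (mul_pos hpos h.width_pos).ne' _ _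

lemma eventually_sum_R_ne_zero : ∀ᶠ n in atTop, ∑ k ∈ Finset.Icc 1 n, (R n k : ℝ) ≠ 0 := by
  have hzero : ∫ x, x ^ 0 ∂ProbabilityTheory.gaussianReal 0 1 ≠ 0 := by simp
  filter_upwards [(tendsto_sum_pow_mul_R_div_sum_R 0).eventually_ne hzero] with n hn
  exact (div_ne_zero_iff.1 hn).2

lemma sum_sq_sub_mean_mul_div_sum {ι : Type*} (I : Finset ι) (x r : ι → ℝ) {q s : ℝ} (hs : s ≠ 0)
    (hr : ∑ k ∈ I, r k ≠ 0) :
    (∑ k ∈ I, (x k - (∑ i ∈ I, x i * r i) / ∑ i ∈ I, r i) ^ 2 * r k) / ∑ k ∈ I, r k =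
      s ^ 2 * ((∑ k ∈ I, ((x k - q) / s) ^ 2 * r k) / ∑ k ∈ I, r k -
        ((∑ k ∈ I, (x k - q) / s * r k) / ∑ k ∈ I, r k) ^ 2) := by
  let y (k : ι) : ℝ := (x k - q) / s
  have hy (k : ι) : (x k - q) / s = y k := rfl
  have hx (k : ι) : x k = q + s * y k := by rw [← hy, mul_div_cancel₀ _ hs, add_sub_cancel]
  simp only [hy]
  clear_value y
  set T := ∑ k ∈ I, r k with hT
  set μ := (∑ k ∈ I, y k * r k) / T
  have hmean : (∑ k ∈ I, x k * r k) / T = q + s * μ := by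
    simp only [hx, add_mul, mul_assoc, Finset.sum_add_distrib, ← Finset.mul_sum]
    rw [← hT, add_div, mul_div_cancel_right₀ _ hr, mul_div_assoc]
  have hsq : ∑ k ∈ I, (x k - (q + s * μ)) ^ 2 * r k =
      s ^ 2 * (∑ k ∈ I, y k ^ 2 * r k - 2 * μ * ∑ k ∈ I, y k * r k + μ ^ 2 * T) := by
    rw [hT]
    simp only [Finset.mul_sum, ← Finset.sum_sub_distrib, ← Finset.sum_add_distrib, hx]
    exact Finset.sum_congr rfl fun k _ => by ring
  have hμT : ∑ k ∈ I, y k * r k = μ * T := (div_mul_cancel₀ _ hr).symm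
  rw [hmean, hsq, hμT]
  field_simp
  ring

lemma varShort_eq {n : ℕ} {q s : ℝ} (hs : s ≠ 0) (hR : ∑ k ∈ Finset.Icc 1 n, (R n k : ℝ) ≠ 0) :
    varShort n = s ^ 2 * ((∑ k ∈ Finset.Icc 1 n, ((k - q) / s) ^ 2 * R n k) /
      ∑ k ∈ Finset.Icc 1 n, (R n k : ℝ) -
        ((∑ k ∈ Finset.Icc 1 n, (k - q) / s * R n k) / ∑ k ∈ Finset.Icc 1 n, (R n k : ℝ)) ^ 2) :=
  sum_sq_sub_mean_mul_div_sum _ (fun k : ℕ => (k : ℝ)) (fun k => (R n k : ℝ)) hs hR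

end Variance

/-- The variance of the number of short chords in crystallized diagrams with `n` chords is
asymptotic to `√(2n / log³ n)` as `n → ∞`. -/
theorem varShort_asymptotic :
    Filter.Tendsto (fun n : ℕ => varShort n * Real.sqrt ((Real.log n) ^ 3 / (2 * (n : ℝ))))
      Filter.atTop (nhds 1) := by
  have hfirst := tendsto_sum_pow_mul_R_div_sum_R 1
  have hsecond := tendsto_sum_pow_mul_R_div_sum_R 2
  simp only [pow_one, ProbabilityTheory.integral_id_gaussianReal] at hfirst
  rw [integral_sq_gaussianReal_zero] at hsecond
  have hvar := tendsto_width_sq_mul_sqrt.mul (hsecond.sub (hfirst.pow 2))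
  simp only [NNReal.coe_one, ne_eq, OfNat.ofNat_ne_zero, not_false_eq_true, zero_pow, sub_zero,
    mul_one] at hvar
  refine hvar.congr' ?_
  filter_upwards [eventually_isSaddle, eventually_sum_R_ne_zero] with n h hR
  rw [varShort_eq (q := mode n) h.width_pos.ne' hR, mul_right_comm]

end ChordBubbles
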